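/- For every ε > 0 there is a constant C(ε) such that for all T ≥ 10, with y = T^{3/4}: Σ over quadruples of positive integers n₁, n₂, n₃, n₄ ≤ y with √n₁ + √n₂ + √n₃ − √n₄ ≠ 0 of d(n₁)d(n₂)d(n₃)d(n₄)/(n₁n₂n₃n₄)^{3/4} · min(T², T^{3/2}/|√n₁ + √n₂ + √n₃ − √n₄|) ≤ C(ε) · T^{2−1/8+ε}. -/

import Mathlib

open Real MeasureTheory Finset
open scoped Classical

noncomputable section

lemma od_divisor_bound (δ : ℝ) (hδ : 0 < δ) :
    ∃ C : ℝ, 1 ≤ C ∧ ∀ n : ℕ, 1 ≤ n → (n.divisors.card : ℝ) ≤ C * (n : ℝ) ^ δ := by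
  set K : ℝ := 1 + 1 / (δ * Real.log 2) with hK
  have hl2 : 0 < Real.log 2 := Real.log_pos (by norm_num)
  have hdl : 0 < δ * Real.log 2 := by positivity
  have hK1 : 1 ≤ K := by rw [hK]; have : 0 < 1 / (δ * Real.log 2) := by positivity
                         linarith
  obtain ⟨P, hP⟩ := exists_nat_ge ((2:ℝ) ^ (1 / δ))
  refine ⟨K ^ P, one_le_pow₀ hK1, fun n hn => ?_⟩
  have hn0 : n ≠ 0 := by omega
  have key : ∀ p ∈ n.primeFactors, ((n.factorization p + 1 : ℕ) : ℝ) ≤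
      (if p < P then K else 1) * ((p : ℝ) ^ (n.factorization p)) ^ δ := by
    intro p hp
    have hpp := Nat.prime_of_mem_primeFactors hp
    have hp2 : (2:ℝ) ≤ p := by exact_mod_cast hpp.two_le
    have hp0 : (0:ℝ) ≤ p := by linarith
    set v := n.factorization p
    have e1 : ((p : ℝ) ^ v) ^ δ = ((p : ℝ) ^ δ) ^ v := by
      rw [← Real.rpow_natCast, ← Real.rpow_mul hp0, mul_comm, Real.rpow_mul hp0, Real.rpow_natCast]
    rw [e1]
    split_ifs with h
    · have h1 : ((2:ℝ) ^ δ) ^ v ≤ ((p:ℝ) ^ δ) ^ v := by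
        gcongr
      have h2 : 1 + v * (δ * Real.log 2) ≤ ((2:ℝ) ^ δ) ^ v := by
        have : ((2:ℝ) ^ δ) ^ v = Real.exp (v * (δ * Real.log 2)) := by
          rw [Real.rpow_def_of_pos (by norm_num), ← Real.exp_nat_mul]; ring_nf
        rw [this]
        linarith [Real.add_one_le_exp (v * (δ * Real.log 2))]
      have h3 : ((v + 1 : ℕ) : ℝ) ≤ K * (1 + v * (δ * Real.log 2)) := by
        rw [hK]; push_cast
        have : (1 + 1 / (δ * Real.log 2)) * (1 + v * (δ * Real.log 2)) =
          1 + v * (δ * Real.log 2) + 1 / (δ * Real.log 2) + v := by field_simp; ring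
        rw [this]
        have : 0 ≤ v * (δ * Real.log 2) := by positivity
        have : 0 ≤ 1 / (δ * Real.log 2) := by positivity
        linarith
      calc _ ≤ _ := h3
        _ ≤ _ := by gcongr; exact h2.trans h1
    · push Not at h
      have h1 : (2:ℝ) ≤ (p:ℝ) ^ δ := by
        have : (2:ℝ) ^ (1/δ) ≤ p := hP.trans (by exact_mod_cast h)
        calc (2:ℝ) = ((2:ℝ) ^ (1/δ)) ^ δ := by
              rw [← Real.rpow_mul (by norm_num)]; field_simp; simp
          _ ≤ _ := by gcongr
      have h2 : ((v + 1 : ℕ) : ℝ) ≤ 2 ^ v := by exact_mod_cast Nat.lt_two_pow_self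
      rw [one_mul]
      exact h2.trans (by gcongr)
  rw [Nat.card_divisors hn0]
  have e2 : (n : ℝ) ^ δ = ∏ p ∈ n.primeFactors, ((p : ℝ) ^ (n.factorization p)) ^ δ := by
    rw [Real.finsetProd_rpow _ _ (fun i _ => by positivity)]
    congr 1
    conv_lhs => rw [← Nat.prod_factorization_pow_eq_self hn0]
    rw [Finsupp.prod]
    push_cast
    rfl
  rw [e2]
  push_cast
  calc _ ≤ ∏ p ∈ n.primeFactors, (if p < P then K else 1) * ((p : ℝ) ^ (n.factorization p)) ^ δ := by
        refine Finset.prod_le_prod (fun i _ => by positivity) (fun p hp => ?_)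
        have := key p hp
        push_cast at this
        exact this
    _ = (∏ p ∈ n.primeFactors, (if p < P then K else 1)) * _ := Finset.prod_mul_distrib
    _ ≤ _ := by
        gcongr
        rw [Finset.prod_ite]
        simp only [Finset.prod_const, one_pow, mul_one]
        apply pow_le_pow_right₀ hK1
        calc _ ≤ (Finset.range P).card := Finset.card_le_card (fun x hx => by
                simp at hx ⊢; exact hx.2)
          _ = P := by simp

lemma od_log_bound (δ : ℝ) (hδ : 0 < δ) :
    ∃ C : ℝ, 1 ≤ C ∧ ∀ x : ℝ, 1 ≤ x → 1 + Real.log x ≤ C * x ^ δ := by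
  refine ⟨1 + 1 / δ, by have : 0 < 1 / δ := by positivity
                        linarith, fun x hx => ?_⟩
  have h1 := Real.log_le_rpow_div (x := x) (by linarith) hδ
  have h2 : 1 ≤ x ^ δ := Real.one_le_rpow hx hδ.le
  have : (1 + 1 / δ) * x ^ δ = x ^ δ + x ^ δ / δ := by ring
  rw [this]; linarith

lemma od_card_sep (X : Finset ℕ) (L : ℝ) (hL : 0 ≤ L)
    (h : ∀ x ∈ X, ∀ y ∈ X, x ≤ y → ((y : ℝ) - x) ≤ L) : (X.card : ℝ) ≤ L + 1 := by
  rcases X.eq_empty_or_nonempty with rfl | hne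
  · simp; linarith
  · have h1 := h _ (X.min'_mem hne) _ (X.max'_mem hne) (Finset.min'_le _ _ (X.max'_mem hne))
    have h2 : X ⊆ Finset.Icc (X.min' hne) (X.max' hne) := fun x hx => by
      simp [Finset.min'_le _ _ hx, Finset.le_max' _ _ hx]
    have h3 := Finset.card_le_card h2
    rw [Nat.card_Icc] at h3
    have h4 : X.min' hne ≤ X.max' hne := Finset.min'_le _ _ (X.max'_mem hne)
    have h5 : (X.card : ℝ) ≤ X.max' hne + 1 - X.min' hne := by
      have : X.card + X.min' hne ≤ X.max' hne + 1 := by omega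
      have : (X.card : ℝ) + X.min' hne ≤ X.max' hne + 1 := by exact_mod_cast this
      linarith
    linarith

lemma od_harm (n : ℕ) : ∑ q ∈ Finset.Icc 1 n, (1 : ℝ) / q ≤ 1 + Real.log n := by
  have := harmonic_le_one_add_log n
  rw [harmonic_eq_sum_Icc] at this
  push_cast at this
  simpa using this

/-- sum of 1/(1+|k|) over integers in [-K,K] -/
lemma od_harm_int (K : ℕ) (s : Finset ℤ) (hs : ∀ k ∈ s, k.natAbs ≤ K) :
    ∑ k ∈ s, (1 : ℝ) / (1 + |(k : ℝ)|) ≤ 2 * (1 + Real.log (K + 1)) := by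
  have e : ∀ k : ℤ, |(k:ℝ)| = (k.natAbs : ℝ) := fun k => by
    rw [Nat.cast_natAbs]; push_cast; rfl
  simp only [e]
  have hmap : ∀ k ∈ s, k.natAbs + 1 ∈ Finset.Icc 1 (K+1) := fun k hk => by
    have := hs k hk
    simp; omega
  rw [← Finset.sum_fiberwise_of_maps_to hmap]
  have := od_harm (K+1)
  push_cast at this
  calc _ ≤ ∑ q ∈ Finset.Icc 1 (K+1), 2 * ((1:ℝ) / q) := by
        apply Finset.sum_le_sum
        intro q hq
        simp only [Finset.mem_Icc] at hq
        have hq0 : (0:ℝ) < q := by exact_mod_cast (by omega : 0 < q)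
        calc _ = ∑ i ∈ s with i.natAbs + 1 = q, (1:ℝ) / q := by
              apply Finset.sum_congr rfl
              intro k hk
              simp only [Finset.mem_filter] at hk
              rw [← hk.2]; push_cast; ring_nf
          _ = ((s.filter (fun i => i.natAbs + 1 = q)).card : ℝ) * (1 / q) := by simp
          _ ≤ 2 * (1 / q) := by
              gcongr
              have : (s.filter (fun i => i.natAbs + 1 = q)) ⊆ {((q:ℤ) - 1), -((q:ℤ)-1)} := by
                intro k hk
                simp only [Finset.mem_filter] at hk
                simp
                omega
              have h2 := (Finset.card_le_card this).trans Finset.card_le_two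
              exact_mod_cast h2
    _ = 2 * ∑ q ∈ Finset.Icc 1 (K+1), ((1:ℝ) / q) := by rw [Finset.mul_sum]
    _ ≤ _ := by linarith

/-- basic facts on square roots in a dyadic block -/
lemma od_sqrt_blk {A n : ℕ} (hn : n ∈ Finset.Ico A (2*A)) :
    Real.sqrt A ≤ Real.sqrt n ∧ Real.sqrt n ≤ Real.sqrt 2 * Real.sqrt A := by
  simp only [Finset.mem_Ico] at hn
  constructor
  · exact Real.sqrt_le_sqrt (by exact_mod_cast hn.1)
  · rw [← Real.sqrt_mul (by norm_num)]
    exact Real.sqrt_le_sqrt (by exact_mod_cast hn.2.le)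

lemma od_sqrt_two : Real.sqrt 2 < 1.415 ∧ 1.414 < Real.sqrt 2 := by
  constructor
  · rw [Real.sqrt_lt' (by norm_num)]; norm_num
  · apply Real.lt_sqrt_of_sq_lt; norm_num

/-- For fixed shift `k`, few `b` with `√(b+k) - √b` in a given window. -/
lemma od_fixed_shift (B k : ℕ) (hB : 1 ≤ B) (hk : 1 ≤ k) (D g : ℝ) (hD : 0 < D)
    (X : Finset ℕ) (hX : ∀ b ∈ X, b ∈ Finset.Ico B (2*B) ∧ b + k ∈ Finset.Ico B (2*B) ∧
      |Real.sqrt ((b + k : ℕ) : ℝ) - Real.sqrt b - g| ≤ D) :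
    (X.card : ℝ) ≤ 48 * D * (B * Real.sqrt B) / k + 1 := by
  have hB0 : (0:ℝ) < B := by exact_mod_cast hB
  have hk0 : (0:ℝ) < k := by exact_mod_cast hk
  have hsB : 0 < Real.sqrt B := Real.sqrt_pos.mpr hB0
  apply od_card_sep
  · positivity
  intro x hx y hy hxy
  obtain ⟨hx1, hx2, hx3⟩ := hX x hx
  obtain ⟨hy1, hy2, hy3⟩ := hX y hy
  obtain ⟨hs2, hs2'⟩ := od_sqrt_two
  have ax := od_sqrt_blk hx1
  have ax' := od_sqrt_blk hx2
  have ay := od_sqrt_blk hy1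
  have ay' := od_sqrt_blk hy2
  set s := Real.sqrt B
  have hss : s * s = B := Real.mul_self_sqrt hB0.le
  set p := Real.sqrt x
  set q := Real.sqrt ((x + k : ℕ) : ℝ)
  set u := Real.sqrt y
  set v := Real.sqrt ((y + k : ℕ) : ℝ)
  have hp : p * p = x := Real.mul_self_sqrt (by positivity)
  have hq : q * q = x + k := by rw [Real.mul_self_sqrt (by positivity)]; push_cast; ring
  have hu : u * u = y := Real.mul_self_sqrt (by positivity)
  have hv : v * v = y + k := by rw [Real.mul_self_sqrt (by positivity)]; push_cast; ring
  have hpu : p ≤ u := Real.sqrt_le_sqrt (by exact_mod_cast hxy)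
  have hqv : q ≤ v := Real.sqrt_le_sqrt (by exact_mod_cast (by omega : x + k ≤ y + k))
  have hbound : Real.sqrt 2 * s ≤ 1.415 * s := by gcongr
  have b1 := ax.1; have b2 := ax.2.trans hbound
  have b3 := ax'.1; have b4 := ax'.2.trans hbound
  have b5 := ay.1; have b6 := ay.2.trans hbound
  have b7 := ay'.1; have b8 := ay'.2.trans hbound
  have h1 : (q - p) - (v - u) ≤ 2 * D := by
    have := abs_le.mp hx3
    have := abs_le.mp hy3
    linarith
  -- (q-p)(q+p) = k etc.
  have e1 : (q - p) * (q + p) = k := by linear_combination hq - hp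
  have e2 : (v - u) * (v + u) = k := by linear_combination hv - hu
  have e3 : (u - p) * (u + p) = y - x := by linear_combination hu - hp
  have i1 : ((q - p) - (v - u)) * ((q + p) * (v + u)) = k * ((v - q) + (u - p)) := by
    linear_combination (v + u) * e1 - (q + p) * e2
  have i2 : (u - p) * (2.83 * s) ≥ y - x := by
    rw [← e3]; apply mul_le_mul_of_nonneg_left <;> linarith
  have i3 : (q + p) * (v + u) ≤ (2.83 * s) * (2.83 * s) := by
    apply mul_le_mul <;> linarith
  have i4 : k * (u - p) ≤ 2 * D * ((2.83 * s) * (2.83 * s)) := by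
    calc k * (u - p) ≤ k * ((v - q) + (u - p)) := by
            apply mul_le_mul_of_nonneg_left _ hk0.le; linarith
      _ = ((q - p) - (v - u)) * ((q + p) * (v + u)) := i1.symm
      _ ≤ (2 * D) * ((q + p) * (v + u)) := by
            apply mul_le_mul_of_nonneg_right h1; apply mul_nonneg <;> linarith
      _ ≤ _ := by apply mul_le_mul_of_nonneg_left i3; linarith
  rw [le_div_iff₀ hk0]
  calc ((y:ℝ) - x) * k ≤ (u - p) * (2.83 * s) * k := by gcongr
    _ = (k * (u - p)) * (2.83 * s) := by ring
    _ ≤ (2 * D * ((2.83 * s) * (2.83 * s))) * (2.83 * s) := by gcongr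
    _ = (2 * 2.83^3) * D * ((s * s) * s) := by ring
    _ ≤ 48 * D * (B * s) := by
        rw [hss]
        have h9 : 0 ≤ D * (B * s) := by positivity
        have h10 : (2 * 2.83^3 : ℝ) ≤ 48 := by norm_num
        calc (2 * 2.83^3) * D * (B * s) = (2 * 2.83^3) * (D * (B * s)) := by ring
          _ ≤ 48 * (D * (B * s)) := mul_le_mul_of_nonneg_right h10 h9
          _ = _ := by ring

/-- For a fixed gap `g`, few pairs `(b,b')` with `√b' - √b` within `D` of `g`. -/
lemma od_pairs_gap (A B h : ℕ) (hA : 1 ≤ A) (hB : 1 ≤ B) (hh : 1 ≤ h) (D g : ℝ) (hD : 0 < D)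
    (hDA : 8 * D * Real.sqrt A ≤ 1)
    (hg1 : h ≤ g * (2.83 * Real.sqrt A)) (hg2 : g * (2 * Real.sqrt A) ≤ h)
    (X : Finset (ℕ × ℕ)) (hX : ∀ b ∈ X, b.1 ∈ Finset.Ico B (2*B) ∧ b.2 ∈ Finset.Ico B (2*B) ∧
      |Real.sqrt (b.2 : ℝ) - Real.sqrt b.1 - g| ≤ D) :
    (X.card : ℝ) ≤ 3 * h * (Real.sqrt B / Real.sqrt A) + 432 * D * (B * Real.sqrt B) := by
  have hA0 : (0:ℝ) < A := by exact_mod_cast hA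
  have hB0 : (0:ℝ) < B := by exact_mod_cast hB
  have hh1 : (1:ℝ) ≤ h := by exact_mod_cast hh
  have hsA : 0 < Real.sqrt A := Real.sqrt_pos.mpr hA0
  have hsB : 0 < Real.sqrt B := Real.sqrt_pos.mpr hB0
  obtain ⟨hs2, hs2'⟩ := od_sqrt_two
  have hDg : D ≤ g / 2 := by
    by_contra hc
    push Not at hc
    nlinarith
  have hg0 : 0 < g := by linarith
  set ρ := Real.sqrt B / Real.sqrt A with hρ
  have hρ0 : 0 < ρ := by positivity
  have hρA : ρ * Real.sqrt A = Real.sqrt B := by rw [hρ]; field_simp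
  -- range of the differences
  have hdiff : ∀ b ∈ X, b.1 < b.2 ∧ h * ρ ≤ 3 * ((b.2 - b.1 : ℕ) : ℝ) ∧
      ((b.2 - b.1 : ℕ) : ℝ) ≤ 3 * h * ρ := by
    intro b hb
    obtain ⟨h1, h2, h3⟩ := hX b hb
    have a1 := od_sqrt_blk h1
    have a2 := od_sqrt_blk h2
    have h4 := abs_le.mp h3
    have hlt : Real.sqrt (b.1:ℝ) < Real.sqrt (b.2:ℝ) := by linarith
    have hlt2 : b.1 < b.2 := by
      rw [Real.sqrt_lt_sqrt_iff (by positivity)] at hlt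
      exact_mod_cast hlt
    have hbound : Real.sqrt 2 * Real.sqrt B ≤ 1.415 * Real.sqrt B := by gcongr
    have ed : ((b.2 - b.1 : ℕ) : ℝ) = (Real.sqrt b.2 - Real.sqrt b.1) * (Real.sqrt b.2 + Real.sqrt b.1) := by
      rw [Nat.cast_sub hlt2.le]
      have q1 := Real.mul_self_sqrt (show (0:ℝ) ≤ b.1 by positivity)
      have q2 := Real.mul_self_sqrt (show (0:ℝ) ≤ b.2 by positivity)
      linear_combination q1 - q2
    have lo : g / 2 * (2 * Real.sqrt B) ≤ ((b.2 - b.1 : ℕ) : ℝ) := by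
      rw [ed]; apply mul_le_mul <;> linarith
    have hi : ((b.2 - b.1 : ℕ) : ℝ) ≤ (3/2 * g) * (2.83 * Real.sqrt B) := by
      rw [ed]; apply mul_le_mul <;> linarith
    refine ⟨hlt2, ?_, ?_⟩
    · rw [← hρA] at lo
      have : h * ρ ≤ g * (2.83 * Real.sqrt A) * ρ := by gcongr
      nlinarith [mul_pos (mul_pos hg0 hρ0) hsA]
    · rw [← hρA] at hi
      have : g * (2 * Real.sqrt A) * ρ ≤ h * ρ := by gcongr
      nlinarith [mul_pos (mul_pos hg0 hρ0) hsA]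
  have hfib : ∀ k ∈ X.image (fun b => b.2 - b.1), ((X.filter (fun b => b.2 - b.1 = k)).card : ℝ) ≤
      144 * D * (B * Real.sqrt B) / (h * ρ) + 1 := by
    intro k hk
    simp only [Finset.mem_image] at hk
    obtain ⟨b0, hb0, rfl⟩ := hk
    obtain ⟨c1, c2, c3⟩ := hdiff b0 hb0
    set k := b0.2 - b0.1
    have hk1 : 1 ≤ k := by omega
    have hk0 : (0:ℝ) < k := by exact_mod_cast hk1
    have hinj : Set.InjOn (fun b : ℕ × ℕ => b.1) (X.filter (fun b => b.2 - b.1 = k) : Finset (ℕ × ℕ)) := by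
      intro b hb b' hb' hbb
      simp only [Finset.coe_filter, Set.mem_ofPred_eq] at hb hb'
      have := (hdiff b hb.1).1
      have := (hdiff b' hb'.1).1
      simp only at hbb
      ext
      · exact hbb
      · omega
    rw [← Finset.card_image_of_injOn hinj]
    refine (od_fixed_shift B k hB hk1 D g hD _ ?_).trans ?_
    · intro b hb
      simp only [Finset.mem_image, Finset.mem_filter] at hb
      obtain ⟨b', ⟨hb1, hb2⟩, rfl⟩ := hb
      have h5 := (hdiff b' hb1).1
      obtain ⟨h1, h2, h3⟩ := hX b' hb1
      have : b'.1 + k = b'.2 := by omega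
      rw [this]
      exact ⟨h1, h2, h3⟩
    · gcongr ?_ + 1
      rw [div_le_div_iff₀ hk0 (by positivity)]
      have : 0 ≤ D * (B * Real.sqrt B) := by positivity
      calc 48 * D * (B * Real.sqrt B) * (h * ρ) ≤ 48 * D * (B * Real.sqrt B) * (3 * k) := by gcongr
        _ = _ := by ring
  have hcardim : ((X.image (fun b => b.2 - b.1)).card : ℝ) ≤ 3 * h * ρ := by
    have : X.image (fun b => b.2 - b.1) ⊆ Finset.Icc 1 ⌊3 * h * ρ⌋₊ := by
      intro k hk
      simp only [Finset.mem_image] at hk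
      obtain ⟨b0, hb0, rfl⟩ := hk
      obtain ⟨c1, c2, c3⟩ := hdiff b0 hb0
      simp only [Finset.mem_Icc]
      exact ⟨by omega, Nat.le_floor c3⟩
    have h2 := Finset.card_le_card this
    rw [Nat.card_Icc, Nat.add_sub_cancel] at h2
    calc _ ≤ ((⌊3 * h * ρ⌋₊ : ℕ) : ℝ) := by exact_mod_cast h2
      _ ≤ _ := Nat.floor_le (by positivity)
  have htot : (X.card : ℝ) = ∑ k ∈ X.image (fun b => b.2 - b.1), ((X.filter (fun b => b.2 - b.1 = k)).card : ℝ) := by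
    rw [Finset.card_eq_sum_card_image (fun b : ℕ × ℕ => b.2 - b.1) X]
    push_cast; rfl
  rw [htot]
  calc _ ≤ ∑ k ∈ X.image (fun b => b.2 - b.1), (144 * D * (B * Real.sqrt B) / (h * ρ) + 1) :=
        Finset.sum_le_sum hfib
    _ = ((X.image (fun b => b.2 - b.1)).card : ℝ) * (144 * D * (B * Real.sqrt B) / (h * ρ) + 1) := by
        rw [Finset.sum_const, nsmul_eq_mul]
    _ ≤ (3 * h * ρ) * (144 * D * (B * Real.sqrt B) / (h * ρ) + 1) := by gcongr
    _ = _ := by field_simp; ring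

/-- Cauchy-Schwarz over short blocks. -/
lemma od_blocks (S : Finset ℕ) (A Q : ℕ) (R : ℝ) (hS : S ⊆ Finset.Ico A (2*A)) (hR : 4 ≤ R)
    (hr : R ≤ S.card) (hQ : 1 ≤ Q) (hQR : 2 * (A:ℝ) ≤ Q * R) :
    ((S.card : ℝ))^2 ≤ 6 * R *
      (((S ×ˢ S).filter (fun p => p.1 < p.2 ∧ p.2 < p.1 + Q)).card : ℝ) := by
  set F := (S ×ˢ S).filter (fun p => p.1 < p.2 ∧ p.2 < p.1 + Q) with hF
  set j : ℕ → ℕ := fun a => (a - A) / Q with hj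
  have hQ0 : (0:ℝ) < Q := by exact_mod_cast hQ
  -- number of blocks
  have hjm : ∀ a ∈ S, j a ∈ Finset.range (A / Q + 1) := by
    intro a ha
    have := Finset.mem_Ico.mp (hS ha)
    rw [Finset.mem_range, Nat.lt_succ_iff]
    exact Nat.div_le_div_right (by omega)
  have hnb : ((A / Q + 1 : ℕ) : ℝ) ≤ 3 * R / 4 := by
    have h1 : ((A / Q : ℕ) : ℝ) ≤ (A:ℝ) / Q := Nat.cast_div_le
    have h2 : (A:ℝ) / Q ≤ R / 2 := by
      rw [div_le_div_iff₀ hQ0 (by norm_num)]; linarith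
    push_cast; linarith
  have hsum : (S.card : ℝ) = ∑ i ∈ Finset.range (A / Q + 1), ((S.filter (fun a => j a = i)).card : ℝ) := by
    rw [Finset.card_eq_sum_card_fiberwise (f := j) (t := Finset.range (A / Q + 1)) hjm]
    push_cast; rfl
  have hcs : (S.card : ℝ)^2 ≤ ((A / Q + 1 : ℕ) : ℝ) *
      ∑ i ∈ Finset.range (A / Q + 1), ((S.filter (fun a => j a = i)).card : ℝ)^2 := by
    rw [hsum]
    have := sq_sum_le_card_mul_sum_sq (s := Finset.range (A / Q + 1))
      (f := fun i => ((S.filter (fun a => j a = i)).card : ℝ))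
    simpa using this
  -- sum of squares
  set G := (S ×ˢ S).filter (fun p => j p.1 = j p.2) with hG
  have hsq : ∑ i ∈ Finset.range (A / Q + 1), ((S.filter (fun a => j a = i)).card : ℝ)^2 = (G.card : ℝ) := by
    have hm : ∀ p ∈ G, j p.1 ∈ Finset.range (A / Q + 1) := by
      intro p hp
      rw [hG, Finset.mem_filter, Finset.mem_product] at hp
      exact hjm _ hp.1.1
    rw [Finset.card_eq_sum_card_fiberwise (f := fun p : ℕ × ℕ => j p.1) (t := Finset.range (A / Q + 1)) hm]
    push_cast
    apply Finset.sum_congr rfl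
    intro i _
    rw [sq, ← Nat.cast_mul, ← Finset.card_product]
    congr 2
    ext p
    simp only [hG, Finset.mem_product, Finset.mem_filter]
    constructor
    · rintro ⟨⟨h1, h2⟩, h3, h4⟩
      exact ⟨⟨⟨h1, h3⟩, by rw [h2, h4]⟩, h2⟩
    · rintro ⟨⟨⟨h1, h3⟩, h4⟩, h2⟩
      exact ⟨⟨h1, h2⟩, h3, by rw [← h4, h2]⟩
  have hGc : G.card ≤ S.card + 2 * F.card := by
    have hsub : G ⊆ (S.image (fun a => (a, a)) ∪ F) ∪ F.image Prod.swap := by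
      intro p hp
      rw [hG, Finset.mem_filter, Finset.mem_product] at hp
      obtain ⟨⟨h1, h2⟩, h3⟩ := hp
      have m1 := Finset.mem_Ico.mp (hS h1)
      have m2 := Finset.mem_Ico.mp (hS h2)
      have d1 := Nat.div_add_mod (p.1 - A) Q
      have d2 := Nat.div_add_mod (p.2 - A) Q
      have l1 := Nat.mod_lt (p.1 - A) (show 0 < Q by omega)
      have l2 := Nat.mod_lt (p.2 - A) (show 0 < Q by omega)
      simp only [hj] at h3
      rw [h3] at d1
      simp only [Finset.mem_union, Finset.mem_image, hF, Finset.mem_filter, Finset.mem_product]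
      rcases lt_trichotomy p.1 p.2 with h | h | h
      · left; right; exact ⟨⟨h1, h2⟩, h, by omega⟩
      · left; left; exact ⟨p.1, h1, Prod.ext rfl h⟩
      · right; exact ⟨(p.2, p.1), ⟨⟨h2, h1⟩, h, by simp only; omega⟩, rfl⟩
    calc G.card ≤ _ := Finset.card_le_card hsub
      _ ≤ (S.image (fun a => (a, a)) ∪ F).card + (F.image Prod.swap).card := Finset.card_union_le _ _
      _ ≤ ((S.image (fun a => (a, a))).card + F.card) + F.card :=
          add_le_add (Finset.card_union_le _ _) Finset.card_image_le
      _ ≤ (S.card + F.card) + F.card := by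
          have := Finset.card_image_le (s := S) (f := fun a => (a, a)); omega
      _ = _ := by ring
  rw [hsq] at hcs
  have hGc' : (G.card : ℝ) ≤ S.card + 2 * F.card := by exact_mod_cast hGc
  have hfin : (S.card : ℝ)^2 ≤ (3 * R / 4) * (S.card + 2 * F.card) := by
    refine hcs.trans ?_
    apply mul_le_mul hnb hGc' (by positivity) (by linarith)
  have : R * (S.card : ℝ) ≤ (S.card : ℝ)^2 := by
    rw [sq]; apply mul_le_mul_of_nonneg_right hr (by positivity)
  linarith

def od_P (A B : ℕ) : Finset (ℕ × ℕ) := Finset.Ico A (2*A) ×ˢ Finset.Ico B (2*B)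

def od_f (s : ℝ) (x : ℕ × ℕ) : ℝ := Real.sqrt x.2 + s * Real.sqrt x.1

def od_W (s D : ℝ) (x : ℕ × ℕ) : ℤ := ⌊od_f s x / D⌋

def od_r (A B : ℕ) (s D : ℝ) (w : ℤ) : ℕ := ((od_P A B).filter (fun x => od_W s D x = w)).card

lemma od_P_card (A B : ℕ) : ((od_P A B).card : ℝ) = A * B := by
  unfold od_P
  rw [Finset.card_product, Nat.card_Ico, Nat.card_Ico]
  have h1 : 2 * A - A = A := by omega
  have h2 : 2 * B - B = B := by omega
  rw [h1, h2]; push_cast; ring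

lemma od_W_close {s D : ℝ} (hD : 0 < D) {x y : ℕ × ℕ} (h : od_W s D x = od_W s D y) :
    |od_f s x - od_f s y| ≤ D := by
  have h1 := Int.abs_sub_lt_one_of_floor_eq_floor h
  rw [← sub_div, abs_div, abs_of_pos hD, div_lt_one hD] at h1
  exact h1.le

/-- gap of square roots in a block -/
lemma od_gap {A a h : ℕ} (hA : 1 ≤ A) (ha : a ∈ Finset.Ico A (2*A)) (hah : a + h ∈ Finset.Ico A (2*A)) :
    (h:ℝ) ≤ (Real.sqrt ((a + h : ℕ):ℝ) - Real.sqrt a) * (2.83 * Real.sqrt A) ∧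
    (Real.sqrt ((a + h : ℕ):ℝ) - Real.sqrt a) * (2 * Real.sqrt A) ≤ h := by
  have a1 := od_sqrt_blk ha
  have a2 := od_sqrt_blk hah
  obtain ⟨hs2, hs2'⟩ := od_sqrt_two
  have hbound : Real.sqrt 2 * Real.sqrt A ≤ 1.415 * Real.sqrt A := by gcongr
  have hle : Real.sqrt a ≤ Real.sqrt ((a + h : ℕ):ℝ) :=
    Real.sqrt_le_sqrt (by exact_mod_cast Nat.le_add_right a h)
  have q1 := Real.mul_self_sqrt (show (0:ℝ) ≤ a by positivity)
  have q2 := Real.mul_self_sqrt (show (0:ℝ) ≤ ((a + h : ℕ):ℝ) by positivity)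
  have ed : (Real.sqrt ((a + h : ℕ):ℝ) - Real.sqrt a) * (Real.sqrt ((a + h : ℕ):ℝ) + Real.sqrt a) = h := by
    push_cast at q2 ⊢
    linear_combination q2 - q1
  constructor
  · refine ed.symm.le.trans ?_
    apply mul_le_mul_of_nonneg_left <;> linarith
  · refine le_trans ?_ ed.le
    apply mul_le_mul_of_nonneg_left <;> linarith

lemma od_W_inj {A B : ℕ} (hA : 1 ≤ A) (hB : 1 ≤ B) {s D : ℝ} (hD : 0 < D)
    (hDB : 8 * D * Real.sqrt B ≤ 1) {x y : ℕ × ℕ} (hx : x ∈ od_P A B) (hy : y ∈ od_P A B)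
    (hxy : x.1 = y.1) (hle : x.2 ≤ y.2) (h : od_W s D x = od_W s D y) : x = y := by
  have h1 := od_W_close hD h
  unfold od_P at hx hy
  rw [Finset.mem_product] at hx hy
  have hB0 : (0:ℝ) < B := by exact_mod_cast hB
  have hsB : 0 < Real.sqrt B := Real.sqrt_pos.mpr hB0
  obtain ⟨k, hk⟩ := Nat.exists_eq_add_of_le hle
  have hy2 := hy.2
  rw [hk] at hy2
  have h2 := (od_gap hB hx.2 hy2).1
  rw [← hk] at h2
  unfold od_f at h1
  rw [hxy] at h1
  have h3 : Real.sqrt y.2 - Real.sqrt x.2 ≤ D := by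
    have := (abs_le.mp h1).1; linarith
  have h4 : (k:ℝ) < 1 := by
    calc (k:ℝ) ≤ _ := h2
      _ ≤ D * (2.83 * Real.sqrt B) := by gcongr
      _ < 1 := by nlinarith [mul_pos hD hsB]
  have h5 : k = 0 := by
    have : k < 1 := by exact_mod_cast h4
    omega
  ext
  · exact hxy
  · omega

/-- number of close pairs with small first-coordinate difference -/
lemma od_close_count (A B Q : ℕ) (hA : 1 ≤ A) (hB : 1 ≤ B) (s D H : ℝ) (hs : s = 1 ∨ s = -1)
    (hD : 0 < D) (hDA : 8 * D * Real.sqrt A ≤ 1) (hQ : 1 ≤ Q) (hH : (Q:ℝ) - 1 ≤ H) :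
    ((((od_P A B) ×ˢ (od_P A B)).filter (fun p => od_W s D p.1 = od_W s D p.2 ∧
      p.1.1 < p.2.1 ∧ p.2.1 < p.1.1 + Q)).card : ℝ) ≤
    A * H * (3 * H * (Real.sqrt B / Real.sqrt A) + 432 * D * (B * Real.sqrt B)) := by
  set F := ((od_P A B) ×ˢ (od_P A B)).filter (fun p => od_W s D p.1 = od_W s D p.2 ∧
      p.1.1 < p.2.1 ∧ p.2.1 < p.1.1 + Q) with hF
  have hH0 : 0 ≤ H := by
    have : (1:ℝ) ≤ Q := by exact_mod_cast hQ
    linarith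
  set φ : (ℕ × ℕ) × (ℕ × ℕ) → ℕ × ℕ := fun p => (p.1.1, p.2.1 - p.1.1) with hφ
  set I := Finset.Ico A (2*A) ×ˢ Finset.Icc 1 (Q-1) with hI
  have hmaps : ∀ p ∈ F, φ p ∈ I := by
    intro p hp
    simp only [hF, Finset.mem_filter, Finset.mem_product, od_P] at hp
    simp only [hφ, hI, Finset.mem_product, Finset.mem_Icc]
    exact ⟨hp.1.1.1, by omega, by omega⟩
  have hfib : ∀ i ∈ I, ((F.filter (fun p => φ p = i)).card : ℝ) ≤
      3 * H * (Real.sqrt B / Real.sqrt A) + 432 * D * (B * Real.sqrt B) := by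
    rintro ⟨a, h⟩ hi
    simp only [hI, Finset.mem_product, Finset.mem_Icc] at hi
    obtain ⟨hi1, hi2, hi3⟩ := hi
    have hhH : (h:ℝ) ≤ H := by
      have : (h:ℝ) + 1 ≤ Q := by exact_mod_cast (by omega : h + 1 ≤ Q)
      linarith
    rcases Finset.eq_empty_or_nonempty (F.filter (fun p => φ p = (a, h))) with he | hne
    · rw [he]; simp; positivity
    have hmem : ∀ p ∈ F.filter (fun p => φ p = (a, h)), p.1.1 = a ∧ p.2.1 = a + h ∧
        a + h ∈ Finset.Ico A (2*A) ∧
        p.1.2 ∈ Finset.Ico B (2*B) ∧ p.2.2 ∈ Finset.Ico B (2*B) ∧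
        |(Real.sqrt p.1.2 - Real.sqrt p.2.2) - s * (Real.sqrt ((a+h:ℕ):ℝ) - Real.sqrt a)| ≤ D := by
      intro p hp
      simp only [hF, Finset.mem_filter, Finset.mem_product, od_P, hφ, Prod.mk.injEq] at hp
      obtain ⟨⟨⟨⟨p1, p2⟩, p3, p4⟩, p5, p6, p7⟩, p8, p9⟩ := hp
      have e1 : p.2.1 = a + h := by omega
      refine ⟨p8, e1, e1 ▸ p3, p2, p4, ?_⟩
      have := od_W_close hD p5
      unfold od_f at this
      rw [e1, p8] at this
      convert this using 2
      ring
    obtain ⟨p0, hp0⟩ := hne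
    have hah := (hmem p0 hp0).2.2.1
    have hg := od_gap hA hi1 hah
    refine le_trans ?_ (show 3 * h * (Real.sqrt B / Real.sqrt A) + 432 * D * (B * Real.sqrt B) ≤ _ by gcongr)
    rcases hs with rfl | rfl
    · have hinj : Set.InjOn (fun p : (ℕ × ℕ) × (ℕ × ℕ) => (p.2.2, p.1.2))
          (F.filter (fun p => φ p = (a, h)) : Finset _) := by
        intro p hp p' hp' hpp
        have m1 := hmem p hp
        have m2 := hmem p' hp'
        simp only [Prod.mk.injEq] at hpp
        ext
        · rw [m1.1, m2.1]
        · exact hpp.2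
        · rw [m1.2.1, m2.2.1]
        · exact hpp.1
      rw [← Finset.card_image_of_injOn hinj]
      refine od_pairs_gap A B h hA hB hi2 D _ hD hDA hg.1 hg.2 _ ?_
      intro b hb
      simp only [Finset.mem_image] at hb
      obtain ⟨p, hp, rfl⟩ := hb
      have m1 := hmem p hp
      refine ⟨m1.2.2.2.2.1, m1.2.2.2.1, ?_⟩
      have := m1.2.2.2.2.2
      rwa [one_mul] at this
    · have hinj : Set.InjOn (fun p : (ℕ × ℕ) × (ℕ × ℕ) => (p.1.2, p.2.2))
          (F.filter (fun p => φ p = (a, h)) : Finset _) := by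
        intro p hp p' hp' hpp
        have m1 := hmem p hp
        have m2 := hmem p' hp'
        simp only [Prod.mk.injEq] at hpp
        ext
        · rw [m1.1, m2.1]
        · exact hpp.1
        · rw [m1.2.1, m2.2.1]
        · exact hpp.2
      rw [← Finset.card_image_of_injOn hinj]
      refine od_pairs_gap A B h hA hB hi2 D _ hD hDA hg.1 hg.2 _ ?_
      intro b hb
      simp only [Finset.mem_image] at hb
      obtain ⟨p, hp, rfl⟩ := hb
      have m1 := hmem p hp
      refine ⟨m1.2.2.2.1, m1.2.2.2.2.1, ?_⟩
      have := m1.2.2.2.2.2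
      rw [← abs_neg] at this
      convert this using 2
      ring
  have hIc : (I.card : ℝ) ≤ A * H := by
    rw [hI, Finset.card_product, Nat.card_Ico, Nat.card_Icc]
    have h1 : 2 * A - A = A := by omega
    have h2 : Q - 1 + 1 - 1 = Q - 1 := by omega
    rw [h1, h2]; push_cast [Nat.cast_sub hQ]
    gcongr
  have htot : (F.card : ℝ) = ∑ i ∈ I, ((F.filter (fun p => φ p = i)).card : ℝ) := by
    rw [Finset.card_eq_sum_card_fiberwise (f := φ) (t := I) hmaps]
    push_cast; rfl
  rw [htot]
  refine (Finset.sum_le_sum hfib).trans ?_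
  rw [Finset.sum_const, nsmul_eq_mul]
  gcongr

/-- Lemma C. -/
lemma od_lemmaC (A B : ℕ) (hA : 1 ≤ A) (hB : 1 ≤ B) (s D R : ℝ) (hs : s = 1 ∨ s = -1)
    (hD : 0 < D) (hDA : 8 * D * Real.sqrt A ≤ 1) (hDB : 8 * D * Real.sqrt B ≤ 1) (hR : 4 ≤ R)
    (V : Finset ℤ) (hV : ∀ w ∈ V, R ≤ od_r A B s D w) :
    ∑ w ∈ V, (od_r A B s D w : ℝ)^2 ≤
      72 * (A^3 * (Real.sqrt B / Real.sqrt A)) / R + 5184 * D * A^2 * (B * Real.sqrt B) := by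
  have hA0 : (0:ℝ) < A := by exact_mod_cast hA
  have hR0 : 0 < R := by linarith
  set Q := ⌈2 * (A:ℝ) / R⌉₊ with hQ
  have hQ1 : 1 ≤ Q := Nat.ceil_pos.mpr (by positivity)
  have hQ2 : 2 * (A:ℝ) ≤ Q * R := by
    have := Nat.le_ceil (2 * (A:ℝ) / R)
    rwa [div_le_iff₀ hR0] at this
  have hQ3 : (Q:ℝ) - 1 ≤ 2 * (A:ℝ) / R := by
    have := Nat.ceil_lt_add_one (show 0 ≤ 2 * (A:ℝ) / R by positivity)
    linarith
  have hcc := od_close_count A B Q hA hB s D (2 * (A:ℝ) / R) hs hD hDA hQ1 hQ3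
  set F := ((od_P A B) ×ˢ (od_P A B)).filter (fun p => od_W s D p.1 = od_W s D p.2 ∧
      p.1.1 < p.2.1 ∧ p.2.1 < p.1.1 + Q) with hF
  have hone : ∀ w ∈ V, (od_r A B s D w : ℝ)^2 ≤ 6 * R * ((F.filter (fun p => od_W s D p.1 = w)).card : ℝ) := by
    intro w hw
    set X := (od_P A B).filter (fun x => od_W s D x = w) with hX
    have hinj : Set.InjOn (fun x : ℕ × ℕ => x.1) (X : Finset (ℕ × ℕ)) := by
      intro x hx y hy hxy
      simp only [hX, Finset.mem_coe, Finset.mem_filter] at hx hy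
      simp only at hxy
      rcases le_total x.2 y.2 with h | h
      · exact od_W_inj hA hB hD hDB hx.1 hy.1 hxy h (hx.2.trans hy.2.symm)
      · exact (od_W_inj hA hB hD hDB hy.1 hx.1 hxy.symm h (hy.2.trans hx.2.symm)).symm
    set S := X.image (fun x => x.1) with hS
    have hSc : S.card = od_r A B s D w := Finset.card_image_of_injOn hinj
    have hSs : S ⊆ Finset.Ico A (2*A) := by
      intro a ha
      simp only [hS, Finset.mem_image, hX, Finset.mem_filter, od_P, Finset.mem_product] at ha
      obtain ⟨x, hx, rfl⟩ := ha
      exact hx.1.1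
    have h1 := od_blocks S A Q R hSs hR (by rw [hSc]; exact hV w hw) hQ1 hQ2
    rw [hSc] at h1
    refine h1.trans ?_
    gcongr
    have hsub : (S ×ˢ S).filter (fun p => p.1 < p.2 ∧ p.2 < p.1 + Q) ⊆
        (F.filter (fun p => od_W s D p.1 = w)).image (fun p => (p.1.1, p.2.1)) := by
      intro p hp
      simp only [hS, Finset.mem_filter, Finset.mem_product, Finset.mem_image, hX] at hp
      obtain ⟨⟨⟨x, ⟨hx1, hx2⟩, hx3⟩, y, ⟨hy1, hy2⟩, hy3⟩, h2, h3⟩ := hp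
      simp only [Finset.mem_image, hF, Finset.mem_filter, Finset.mem_product]
      refine ⟨(x, y), ⟨⟨⟨hx1, hy1⟩, by rw [hx2, hy2], ?_, ?_⟩, hx2⟩, Prod.ext hx3 hy3⟩
      · rw [hx3, hy3]; exact h2
      · rw [hx3, hy3]; exact h3
    exact (Finset.card_le_card hsub).trans Finset.card_image_le
  have hsumF : ∑ w ∈ V, ((F.filter (fun p => od_W s D p.1 = w)).card : ℝ) ≤ F.card := by
    have h1 : ∑ w ∈ V, (F.filter (fun p => od_W s D p.1 = w)).card ≤ F.card := by
      rw [Finset.sum_card_fiberwise_eq_card_filter]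
      exact Finset.card_filter_le _ _
    exact_mod_cast h1
  calc _ ≤ ∑ w ∈ V, 6 * R * ((F.filter (fun p => od_W s D p.1 = w)).card : ℝ) := Finset.sum_le_sum hone
    _ = 6 * R * ∑ w ∈ V, ((F.filter (fun p => od_W s D p.1 = w)).card : ℝ) := by rw [Finset.mul_sum]
    _ ≤ 6 * R * (A * (2 * (A:ℝ) / R) * (3 * (2 * (A:ℝ) / R) * (Real.sqrt B / Real.sqrt A) + 432 * D * (B * Real.sqrt B))) := by
        gcongr; exact hsumF.trans hcc
    _ = _ := by field_simp; ring

lemma od_second_moment (A B : ℕ) (hA : 1 ≤ A) (hB : 1 ≤ B) (s D R : ℝ) (hs : s = 1 ∨ s = -1)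
    (hD : 0 < D) (hDA : 8 * D * Real.sqrt A ≤ 1) (hDB : 8 * D * Real.sqrt B ≤ 1) (hR : 4 ≤ R)
    (V : Finset ℤ) :
    ∑ w ∈ V, (od_r A B s D w : ℝ)^2 ≤ R * (A * B) +
      (72 * (A^3 * (Real.sqrt B / Real.sqrt A)) / R + 5184 * D * A^2 * (B * Real.sqrt B)) := by
  rw [← Finset.sum_filter_add_sum_filter_not V (fun w => R ≤ od_r A B s D w), add_comm]
  apply add_le_add
  · have h1 : ∑ w ∈ V, (od_r A B s D w : ℝ) ≤ A * B := by
      rw [← od_P_card]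
      have h1 : ∑ w ∈ V, (od_r A B s D w) ≤ (od_P A B).card := by
        unfold od_r
        rw [Finset.sum_card_fiberwise_eq_card_filter]
        exact Finset.card_filter_le _ _
      exact_mod_cast h1
    calc _ ≤ ∑ w ∈ V.filter (fun w => ¬ (R ≤ od_r A B s D w)), R * (od_r A B s D w : ℝ) := by
          apply Finset.sum_le_sum
          intro w hw
          rw [Finset.mem_filter] at hw
          rw [sq]
          apply mul_le_mul_of_nonneg_right _ (by positivity)
          exact (not_le.mp hw.2).le
      _ ≤ ∑ w ∈ V, R * (od_r A B s D w : ℝ) := by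
          apply Finset.sum_le_sum_of_subset_of_nonneg (Finset.filter_subset _ _)
          intros; positivity
      _ = R * ∑ w ∈ V, (od_r A B s D w : ℝ) := by rw [Finset.mul_sum]
      _ ≤ _ := by gcongr
  · apply od_lemmaC A B hA hB s D R hs hD hDA hDB hR
    intro w hw
    exact (Finset.mem_filter.mp hw).2

/-- The number of pairs of pairs with given window difference -/
lemma od_Ek (A1 A2 A3 A4 : ℕ) (hA1 : 1 ≤ A1) (hA2 : 1 ≤ A2) (hA3 : 1 ≤ A3) (hA4 : 1 ≤ A4)
    (D R R1 L : ℝ) (hD : 0 < D)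
    (hD1 : 8 * D * Real.sqrt A1 ≤ 1) (hD2 : 8 * D * Real.sqrt A2 ≤ 1)
    (hD3 : 8 * D * Real.sqrt A3 ≤ 1) (hD4 : 8 * D * Real.sqrt A4 ≤ 1)
    (hR : 4 ≤ R) (hR1 : 4 ≤ R1) (hL : 0 ≤ L) (k : ℤ)
    (hL2 : (R1 * (A1 * A4) +
      (72 * (A1^3 * (Real.sqrt A4 / Real.sqrt A1)) / R1 + 5184 * D * A1^2 * (A4 * Real.sqrt A4))) *
      (72 * (A2^3 * (Real.sqrt A3 / Real.sqrt A2)) / R + 5184 * D * A2^2 * (A3 * Real.sqrt A3)) ≤ L^2) :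
    ((((od_P A1 A4) ×ˢ (od_P A2 A3)).filter
      (fun p => od_W 1 D p.2 - od_W (-1) D p.1 = k)).card : ℝ) ≤ R * (A1 * A4) + L := by
  set P1 := od_P A1 A4 with hP1
  set P2 := od_P A2 A3 with hP2
  set r1 : ℤ → ℕ := od_r A1 A4 (-1) D with hr1
  set r2 : ℤ → ℕ := od_r A2 A3 1 D with hr2
  set V := P1.image (od_W (-1) D) with hV
  set E := (P1 ×ˢ P2).filter (fun p => od_W 1 D p.2 - od_W (-1) D p.1 = k) with hE
  have hmaps : ∀ p ∈ E, od_W (-1) D p.1 ∈ V := by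
    intro p hp
    rw [hE, Finset.mem_filter, Finset.mem_product] at hp
    exact Finset.mem_image_of_mem _ hp.1.1
  have hcard : (E.card : ℝ) = ∑ w ∈ V, (r1 w : ℝ) * r2 (w + k) := by
    rw [Finset.card_eq_sum_card_fiberwise (f := fun p : (ℕ × ℕ) × (ℕ × ℕ) => od_W (-1) D p.1) (s := E) (t := V) hmaps]
    push_cast
    apply Finset.sum_congr rfl
    intro w _
    rw [hr1, hr2]
    unfold od_r
    rw [← Nat.cast_mul, ← Finset.card_product]
    congr 2
    ext p
    simp only [hE, Finset.mem_product, Finset.mem_filter]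
    constructor
    · rintro ⟨⟨⟨h1, h2⟩, h3⟩, h4⟩
      exact ⟨⟨h1, h4⟩, h2, by omega⟩
    · rintro ⟨⟨h1, h4⟩, h2, h3⟩
      exact ⟨⟨⟨h1, h2⟩, by omega⟩, h4⟩
  have hr1sum : ∑ w ∈ V, (r1 w : ℝ) ≤ A1 * A4 := by
    rw [← od_P_card]
    have h1 : ∑ w ∈ V, (r1 w) ≤ (od_P A1 A4).card := by
      rw [hr1]
      unfold od_r
      rw [Finset.sum_card_fiberwise_eq_card_filter]
      exact Finset.card_filter_le _ _
    exact_mod_cast h1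
  rw [hcard, ← Finset.sum_filter_add_sum_filter_not V (fun w => R ≤ r2 (w + k)), add_comm]
  apply add_le_add
  · calc _ ≤ ∑ w ∈ V.filter (fun w => ¬ (R ≤ r2 (w + k))), R * (r1 w : ℝ) := by
          apply Finset.sum_le_sum
          intro w hw
          rw [Finset.mem_filter] at hw
          rw [mul_comm]
          apply mul_le_mul_of_nonneg_right _ (by positivity)
          exact (not_le.mp hw.2).le
      _ ≤ ∑ w ∈ V, R * (r1 w : ℝ) := by
          apply Finset.sum_le_sum_of_subset_of_nonneg (Finset.filter_subset _ _)
          intros; positivity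
      _ = R * ∑ w ∈ V, (r1 w : ℝ) := by rw [Finset.mul_sum]
      _ ≤ _ := by gcongr
  · set V' := V.filter (fun w => R ≤ r2 (w + k)) with hV'
    apply le_of_sq_le_sq ?_ hL
    refine (Finset.sum_mul_sq_le_sq_mul_sq V' (fun w => (r1 w : ℝ)) (fun w => (r2 (w + k) : ℝ))).trans ?_
    refine le_trans ?_ hL2
    have g1 := od_second_moment A1 A4 hA1 hA4 (-1) D R1 (Or.inr rfl) hD hD1 hD4 hR1 V'
    have g2 := od_lemmaC A2 A3 hA2 hA3 1 D R (Or.inl rfl) hD hD2 hD3 hR (V'.image (fun w => w + k))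
      (by
        intro w hw
        simp only [Finset.mem_image] at hw
        obtain ⟨w', hw', rfl⟩ := hw
        exact (Finset.mem_filter.mp hw').2)
    rw [Finset.sum_image (by intro a _ b _ h; simpa using h)] at g2
    apply mul_le_mul g1 g2
    · positivity
    · positivity

/-- spaced integers -/
lemma od_spaced (S : Finset ℤ) (q X : ℕ) (hq : 1 ≤ q)
    (hb : ∀ p ∈ S, |p| ≤ X * q) (hs : ∀ p ∈ S, ∀ p' ∈ S, ((q:ℤ)^2) ∣ 2 * (p - p')) :
    (S.card : ℝ) ≤ 4 * X / q + 1 := by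
  rcases S.eq_empty_or_nonempty with rfl | hne
  · simp; positivity
  set p1 := S.min' hne with hp1
  have hp1m : p1 ∈ S := S.min'_mem hne
  have hq0 : (0:ℤ) < (q:ℤ)^2 := by positivity
  have hqr : (0:ℝ) < q := by exact_mod_cast hq
  have key : ∀ p ∈ S, ∃ z : ℕ, 2 * (p - p1) = (q:ℤ)^2 * z ∧ z ∈ Finset.range (⌊4 * (X:ℝ) / q⌋₊ + 1) := by
    intro p hp
    obtain ⟨z, hz⟩ := hs p hp p1 hp1m
    have hle : p1 ≤ p := S.min'_le p hp
    have hz0 : 0 ≤ z := by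
      by_contra hc
      push Not at hc
      nlinarith
    lift z to ℕ using hz0
    refine ⟨z, hz, ?_⟩
    rw [Finset.mem_range, Nat.lt_succ_iff]
    apply Nat.le_floor
    have h1 := abs_le.mp (hb p hp)
    have h2 := abs_le.mp (hb p1 hp1m)
    have h3 : (q:ℤ)^2 * z ≤ 4 * (X * q) := by linarith
    have h4 : (q:ℝ)^2 * z ≤ 4 * (X * q) := by exact_mod_cast h3
    rw [le_div_iff₀ hqr]
    nlinarith
  choose! f hf using key
  have hinj : Set.InjOn f (S : Set ℤ) := by
    intro p hp p' hp' h
    have e1 := (hf p hp).1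
    have e2 := (hf p' hp').1
    rw [h, ← e2] at e1
    linarith
  have h1 := Finset.card_le_card_of_injOn f (fun p hp => (hf p hp).2) hinj
  rw [Finset.card_range] at h1
  have h2 : (S.card : ℝ) ≤ (⌊4 * (X:ℝ) / q⌋₊ : ℝ) + 1 := by exact_mod_cast h1
  have h3 : (⌊4 * (X:ℝ) / q⌋₊ : ℝ) ≤ 4 * (X:ℝ) / q := Nat.floor_le (by positivity)
  linarith

/-- roots of a quadratic congruence modulo `q²` -/
lemma od_quad_cong (S : Finset ℤ) (q X : ℕ) (hq : 1 ≤ q) (c : ℤ)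
    (h : ∀ p ∈ S, IsCoprime p (q:ℤ) ∧ |p| ≤ X * q ∧ ((q:ℤ)^2) ∣ p^2 + c) :
    (S.card : ℝ) ≤ (q^2).divisors.card * (4 * X / q + 1) := by
  rcases S.eq_empty_or_nonempty with rfl | ⟨p0, hp0⟩
  · simp; positivity
  have hq2 : q^2 ≠ 0 := by positivity
  set e : ℤ → ℕ := fun p => Int.gcd (p - p0) ((q^2 : ℕ) : ℤ) with he
  have hmaps : ∀ p ∈ S, e p ∈ (q^2).divisors := by
    intro p _
    rw [Nat.mem_divisors]
    refine ⟨?_, hq2⟩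
    have := Int.gcd_dvd_right (p - p0) ((q^2 : ℕ) : ℤ)
    exact_mod_cast this
  have htot : (S.card : ℝ) = ∑ i ∈ (q^2).divisors, ((S.filter (fun p => e p = i)).card : ℝ) := by
    rw [Finset.card_eq_sum_card_fiberwise (f := e) (s := S) (t := (q^2).divisors) hmaps]
    push_cast; rfl
  rw [htot]
  calc _ ≤ ∑ i ∈ (q^2).divisors, (4 * (X:ℝ) / q + 1) := ?_
    _ = _ := by rw [Finset.sum_const, nsmul_eq_mul]
  apply Finset.sum_le_sum
  intro i hi
  apply od_spaced _ q X hq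
  · intro p hp
    exact (h p (Finset.mem_filter.mp hp).1).2.1
  intro p hp p' hp'
  obtain ⟨hpS, hpe⟩ := Finset.mem_filter.mp hp
  obtain ⟨hpS', hpe'⟩ := Finset.mem_filter.mp hp'
  obtain ⟨f, hf⟩ := (Nat.mem_divisors.mp hi).1
  have hi0 : 0 < i := Nat.pos_of_mem_divisors hi
  have hiz : (i:ℤ) ≠ 0 := by positivity
  have hfz : ((q:ℤ)^2) = i * f := by exact_mod_cast hf
  -- i divides p - p0, f divides p + p0
  have step : ∀ r ∈ S, e r = i → (i:ℤ) ∣ r - p0 ∧ (f:ℤ) ∣ r + p0 := by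
    intro r hr her
    have d1 : (i:ℤ) ∣ r - p0 := by rw [← her]; exact Int.gcd_dvd_left _ _
    refine ⟨d1, ?_⟩
    have hd : ((q:ℤ)^2) ∣ (r - p0) * (r + p0) := by
      have h8 := dvd_sub (h r hr).2.2 (h p0 hp0).2.2
      have h9 : (r - p0) * (r + p0) = (r^2 + c) - (p0^2 + c) := by ring
      rw [h9]; exact h8
    obtain ⟨u, hu⟩ := d1
    have hcop : IsCoprime (f:ℤ) u := by
      have hg : Int.gcd (r - p0) ((q^2:ℕ):ℤ) = i := her
      rw [hu, show ((q^2:ℕ):ℤ) = i * f by exact_mod_cast hf, Int.gcd_mul_left] at hg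
      simp only [Int.natAbs_natCast] at hg
      have : Int.gcd u f = 1 := by
        have h9 : i * Int.gcd u f = i * 1 := by omega
        exact Nat.eq_of_mul_eq_mul_left hi0 h9
      exact (Int.isCoprime_iff_gcd_eq_one.mpr this).symm
    rw [hfz, hu, mul_assoc] at hd
    have hd2 : (f:ℤ) ∣ u * (r + p0) := (mul_dvd_mul_iff_left hiz).mp hd
    exact hcop.dvd_of_dvd_mul_left hd2
  obtain ⟨a1, a2⟩ := step p hpS hpe
  obtain ⟨b1, b2⟩ := step p' hpS' hpe'
  have c1 : (i:ℤ) ∣ p - p' := by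
    have h9 : p - p' = (p - p0) - (p' - p0) := by ring
    rw [h9]; exact dvd_sub a1 b1
  have c2 : (f:ℤ) ∣ p - p' := by
    have h9 : p - p' = (p + p0) - (p' + p0) := by ring
    rw [h9]; exact dvd_sub a2 b2
  -- gcd of i and f divides 2
  have ht : ((Int.gcd i f : ℕ) : ℤ) ∣ 2 := by
    set t := Int.gcd i f
    have t1 : (t:ℤ) ∣ i := Int.gcd_dvd_left _ _
    have t2 : (t:ℤ) ∣ f := Int.gcd_dvd_right _ _
    have t3 : (t:ℤ) ∣ 2 * p := by
      have h9 : 2 * p = (p - p0) + (p + p0) := by ring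
      rw [h9]; exact dvd_add (t1.trans a1) (t2.trans a2)
    have t4 : (t:ℤ) ∣ (q:ℤ)^2 := by rw [hfz]; exact t1.mul_right _
    have hcop : IsCoprime (t:ℤ) p := ((h p hpS).1.pow_right (n := 2)).symm.of_isCoprime_of_dvd_left t4
    exact hcop.dvd_of_dvd_mul_right t3
  obtain ⟨w, hw⟩ := ht
  have hbez := Int.gcd_eq_gcd_ab i f
  obtain ⟨u, hu⟩ := c1
  obtain ⟨v, hv⟩ := c2
  set x := Int.gcdA i f
  set y := Int.gcdB i f
  refine ⟨w * (x * v + y * u), ?_⟩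
  rw [hw, hbez, hfz]
  calc (i * x + f * y) * w * (p - p') = i * x * w * (p - p') + f * y * w * (p - p') := by ring
    _ = i * x * w * (f * v) + f * y * w * (i * u) := by rw [← hv, ← hu]
    _ = _ := by ring

/-- counting pairs `(M,U)` -/
lemma od_MU_count (S : Finset (ℕ × ℤ)) (X : ℕ) (k : ℤ) (hk : k ≠ 0) (d0 : ℝ)
    (hd0 : ∀ n : ℕ, 1 ≤ n → n ≤ X^2 → (n.divisors.card : ℝ) ≤ d0)
    (hdk : (k.natAbs.divisors.card : ℝ) ≤ d0) (hX : 1 ≤ X)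
    (h : ∀ z ∈ S, 1 ≤ z.1 ∧ z.1 ≤ X ∧ |z.2| ≤ X * z.1 ∧ ((z.1:ℤ)^2) ∣ z.2^2 + k) :
    (S.card : ℝ) ≤ d0 * d0 * (4 * X * (1 + Real.log X) + X) := by
  have hd00 : 0 ≤ d0 := le_trans (by positivity) hdk
  set φ : ℕ × ℤ → ℕ × ℕ := fun z => (Int.gcd z.1 z.2, z.1 / Int.gcd z.1 z.2) with hφ
  set I := k.natAbs.divisors ×ˢ Finset.Icc 1 X with hI
  have hmaps : ∀ z ∈ S, φ z ∈ I := by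
    intro z hz
    obtain ⟨h1, h2, h3, h4⟩ := h z hz
    have hg1 : ((Int.gcd z.1 z.2 : ℕ):ℤ) ∣ (z.1:ℤ) := Int.gcd_dvd_left _ _
    have hg2 : ((Int.gcd z.1 z.2 : ℕ):ℤ) ∣ z.2 := Int.gcd_dvd_right _ _
    have hg1' : Int.gcd z.1 z.2 ∣ z.1 := by exact_mod_cast hg1
    have hgpos : 0 < Int.gcd z.1 z.2 := Nat.pos_of_dvd_of_pos hg1' h1
    simp only [hφ, hI, Finset.mem_product, Nat.mem_divisors, Finset.mem_Icc]
    refine ⟨⟨?_, by simpa using hk⟩, Nat.div_pos (Nat.le_of_dvd h1 hg1') hgpos, (Nat.div_le_self _ _).trans h2⟩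
    rw [← Int.natCast_dvd]
    have h5 : ((Int.gcd z.1 z.2 : ℕ):ℤ) ∣ z.2^2 + k := (hg1.trans (dvd_pow_self _ two_ne_zero)).trans h4
    exact (dvd_add_right (hg2.trans (dvd_pow_self _ two_ne_zero))).mp h5
  have htot : (S.card : ℝ) = ∑ i ∈ I, ((S.filter (fun p => φ p = i)).card : ℝ) := by
    rw [Finset.card_eq_sum_card_fiberwise (f := φ) (s := S) (t := I) hmaps]
    push_cast; rfl
  have hfib : ∀ i ∈ I, ((S.filter (fun p => φ p = i)).card : ℝ) ≤ d0 * (4 * X / i.2 + 1) := by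
    rintro ⟨g, q⟩ hi
    simp only [hI, Finset.mem_product, Nat.mem_divisors, Finset.mem_Icc] at hi
    obtain ⟨⟨hi1, hi2⟩, hi3, hi4⟩ := hi
    have hg0 : 0 < g := Nat.pos_of_dvd_of_pos hi1 (Int.natAbs_pos.mpr hk)
    have hgz : (g:ℤ) ≠ 0 := by positivity
    rcases (S.filter (fun p => φ p = (g, q))).eq_empty_or_nonempty with he | ⟨z0, hz0⟩
    · rw [he]; simp; positivity
    have hmem : ∀ z ∈ S.filter (fun p => φ p = (g, q)), ∃ p : ℤ, z.1 = g * q ∧ z.2 = g * p ∧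
        IsCoprime p (q:ℤ) ∧ |p| ≤ X * q ∧ ((g:ℤ)^2 ∣ k) ∧ ∃ a, ((g:ℤ)^2) * ((q:ℤ)^2 * a - p^2) = k := by
      intro z hz
      rw [Finset.mem_filter] at hz
      obtain ⟨hzS, hzφ⟩ := hz
      obtain ⟨h1, h2, h3, h4⟩ := h z hzS
      simp only [hφ, Prod.mk.injEq] at hzφ
      obtain ⟨e1, e2⟩ := hzφ
      have hg1 : ((Int.gcd z.1 z.2 : ℕ):ℤ) ∣ (z.1:ℤ) := Int.gcd_dvd_left _ _
      have hg2 : ((Int.gcd z.1 z.2 : ℕ):ℤ) ∣ z.2 := Int.gcd_dvd_right _ _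
      have hg1' : Int.gcd z.1 z.2 ∣ z.1 := by exact_mod_cast hg1
      rw [e1] at hg1 hg2 hg1' e2
      obtain ⟨p, hp⟩ := hg2
      have ez : z.1 = g * q := by rw [← e2]; exact (Nat.mul_div_cancel' hg1').symm
      have ha : ∃ a, ((g:ℤ)^2) * ((q:ℤ)^2 * a - p^2) = k := by
        obtain ⟨a, ha⟩ := h4
        refine ⟨a, ?_⟩
        rw [hp, ez] at ha
        push_cast at ha
        linear_combination -ha
      refine ⟨p, ez, hp, ?_, ?_, ?_, ha⟩
      · rw [hp, ez] at e1
        push_cast at e1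
        rw [Int.gcd_mul_left] at e1
        simp only [Int.natAbs_natCast] at e1
        have : Int.gcd q p = 1 := by
          have h9 : g * Int.gcd q p = g * 1 := by omega
          exact Nat.eq_of_mul_eq_mul_left hg0 h9
        exact (Int.isCoprime_iff_gcd_eq_one.mpr this).symm
      · rw [hp, ez, abs_mul] at h3
        push_cast at h3
        rw [abs_of_nonneg (by positivity : (0:ℤ) ≤ g)] at h3
        have hg0' : (0:ℤ) < g := by positivity
        have : (g:ℤ) * |p| ≤ g * (X * q) := by linarith
        exact le_of_mul_le_mul_left this hg0'
      · obtain ⟨a, ha⟩ := ha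
        exact ⟨_, ha.symm⟩
    choose! f hf using hmem
    obtain ⟨c, hc⟩ := (hf z0 hz0).2.2.2.2.1
    have hinj : Set.InjOn f (S.filter (fun p => φ p = (g, q)) : Finset (ℕ × ℤ)) := by
      intro z hz z' hz' hzz
      have m1 := hf z hz
      have m2 := hf z' hz'
      ext
      · rw [m1.1, m2.1]
      · rw [m1.2.1, m2.2.1, hzz]
    rw [← Finset.card_image_of_injOn hinj]
    refine (od_quad_cong _ q X hi3 c ?_).trans ?_
    · intro p hp
      simp only [Finset.mem_image] at hp
      obtain ⟨z, hz, rfl⟩ := hp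
      obtain ⟨m1, m2, m3, m4, m5, a, ha⟩ := hf z hz
      refine ⟨m3, m4, a, ?_⟩
      rw [hc] at ha
      have := mul_left_cancel₀ (pow_ne_zero 2 hgz) ha
      linarith
    · have := hd0 (q^2) (Nat.one_le_pow _ _ hi3) (Nat.pow_le_pow_left hi4 2)
      simp only
      gcongr
  rw [htot]
  calc _ ≤ ∑ i ∈ I, d0 * (4 * (X:ℝ) / i.2 + 1) := Finset.sum_le_sum hfib
    _ = k.natAbs.divisors.card * (d0 * ∑ q ∈ Finset.Icc 1 X, (4 * (X:ℝ) / q + 1)) := by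
        rw [hI, Finset.sum_product]
        simp only [Finset.sum_const, nsmul_eq_mul, Finset.mul_sum]
    _ = k.natAbs.divisors.card * (d0 * (4 * X * (∑ q ∈ Finset.Icc 1 X, (1:ℝ) / q) + X)) := by
        rw [Finset.sum_add_distrib, Finset.mul_sum]
        congr 3
        · apply Finset.sum_congr rfl; intro q _; ring
        · simp
    _ ≤ d0 * (d0 * (4 * X * (1 + Real.log X) + X)) := by
        have h1 := od_harm X
        have h2 : 0 ≤ ∑ q ∈ Finset.Icc 1 X, (1:ℝ) / q := Finset.sum_nonneg (fun _ _ => by positivity)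
        have h3 : 0 ≤ Real.log X := Real.log_natCast_nonneg X
        gcongr
    _ = _ := by ring

def od_m (n : ℕ × ℕ × ℕ × ℕ) : ℤ := (n.2.2.1:ℤ) + n.2.2.2 - n.1 - n.2.1

def od_U (n : ℕ × ℕ × ℕ × ℕ) : ℤ := (od_m n)^2 + 4 * (n.1 * n.2.1) - 4 * (n.2.2.1 * n.2.2.2)

def od_k (n : ℕ × ℕ × ℕ × ℕ) : ℤ := 16 * (od_m n)^2 * (n.1 * n.2.1) - (od_U n)^2

def od_De (n : ℕ × ℕ × ℕ × ℕ) : ℝ :=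
  Real.sqrt n.1 + Real.sqrt n.2.1 + Real.sqrt n.2.2.1 - Real.sqrt n.2.2.2

lemma od_sum_prod {a b c d : ℤ} (h1 : a + b = c + d) (h2 : a * b = c * d) (hab : a < b) (hcd : c < d) :
    a = c ∧ b = d := by
  have : (a - c) * (a - d) = 0 := by
    have hb : b = c + d - a := by linarith
    subst hb
    linear_combination -h2
  rcases mul_eq_zero.mp this with h | h
  · constructor <;> linarith
  · exfalso; linarith

/-- the number of quadruples with given `k` -/
lemma od_quad_fiber (S : Finset (ℕ × ℕ × ℕ × ℕ)) (X : ℕ) (k : ℤ) (hk : k ≠ 0) (d0 : ℝ)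
    (hd0 : ∀ n : ℕ, 1 ≤ n → n ≤ X^2 → (n.divisors.card : ℝ) ≤ d0)
    (hdk : (k.natAbs.divisors.card : ℝ) ≤ d0) (hX : 1 ≤ X)
    (h : ∀ n ∈ S, 1 ≤ n.1 ∧ 1 ≤ n.2.1 ∧ n.1 * n.2.1 ≤ X^2 ∧ n.2.2.1 < n.2.2.2 ∧ 0 < od_m n ∧
      4 * od_m n ≤ X ∧ |od_U n| ≤ X * (4 * od_m n) ∧ od_k n = k) :
    (S.card : ℝ) ≤ d0 * d0 * (4 * X * (1 + Real.log X) + X) * d0 := by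
  have hd00 : 0 ≤ d0 := le_trans (by positivity) hdk
  set φ : ℕ × ℕ × ℕ × ℕ → ℕ × ℤ := fun n => ((4 * od_m n).toNat, od_U n) with hφ
  have hto : ∀ n ∈ S, ((4 * od_m n).toNat : ℤ) = 4 * od_m n := by
    intro n hn
    have := (h n hn).2.2.2.2.1
    exact Int.toNat_of_nonneg (by linarith)
  set I := S.image φ with hI
  have hIc : (I.card : ℝ) ≤ d0 * d0 * (4 * X * (1 + Real.log X) + X) := by
    apply od_MU_count I X k hk d0 hd0 hdk hX
    intro z hz
    simp only [hI, Finset.mem_image] at hz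
    obtain ⟨n, hn, rfl⟩ := hz
    obtain ⟨h1, h2, h3, h4, h5, h6, h7, h8⟩ := h n hn
    have ht := hto n hn
    simp only [hφ]
    rw [ht]
    refine ⟨by omega, by omega, h7, n.1 * n.2.1, ?_⟩
    rw [← h8]; unfold od_k; ring
  have htot : (S.card : ℝ) = ∑ i ∈ I, ((S.filter (fun p => φ p = i)).card : ℝ) := by
    rw [Finset.card_eq_sum_card_image φ S]
    push_cast; rfl
  have hfib : ∀ i ∈ I, ((S.filter (fun p => φ p = i)).card : ℝ) ≤ d0 := by
    intro i hi
    simp only [hI, Finset.mem_image] at hi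
    obtain ⟨n0, hn0, rfl⟩ := hi
    obtain ⟨h1, h2, h3, h4, h5, h6, h7, h8⟩ := h n0 hn0
    refine le_trans ?_ (hd0 (n0.1 * n0.2.1) (Nat.mul_pos h1 h2) h3)
    have hsame : ∀ n ∈ S.filter (fun p => φ p = φ n0), n.1 * n.2.1 = n0.1 * n0.2.1 ∧ od_m n = od_m n0 ∧
        od_U n = od_U n0 := by
      intro n hn
      rw [Finset.mem_filter] at hn
      obtain ⟨hnS, hnφ⟩ := hn
      simp only [hφ, Prod.mk.injEq] at hnφ
      have e1 := hto n hnS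
      have e2 := hto n0 hn0
      have em : od_m n = od_m n0 := by
        have : 4 * od_m n = 4 * od_m n0 := by rw [← e1, ← e2, hnφ.1]
        linarith
      refine ⟨?_, em, hnφ.2⟩
      have hkk := (h n hnS).2.2.2.2.2.2.2
      rw [← h8] at hkk
      unfold od_k at hkk
      rw [em, hnφ.2] at hkk
      have : 16 * (od_m n0)^2 * ((n.1:ℤ) * n.2.1) = 16 * (od_m n0)^2 * ((n0.1:ℤ) * n0.2.1) := by linarith
      have := mul_left_cancel₀ (by positivity) this
      exact_mod_cast this
    have hinj : Set.InjOn (fun n : ℕ × ℕ × ℕ × ℕ => n.1)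
        (S.filter (fun p => φ p = φ n0) : Finset (ℕ × ℕ × ℕ × ℕ)) := by
      intro n hn n' hn' hnn
      obtain ⟨a1, a2, a3⟩ := hsame n hn
      obtain ⟨b1, b2, b3⟩ := hsame n' hn'
      simp only at hnn
      have hnS := h n (Finset.mem_filter.mp hn).1
      have hnS' := h n' (Finset.mem_filter.mp hn').1
      have e2 : n.2.1 = n'.2.1 := by
        rw [hnn, ← b1] at a1
        exact Nat.eq_of_mul_eq_mul_left hnS'.1 a1
      have em : od_m n = od_m n' := a2.trans b2.symm
      have eU : od_U n = od_U n' := a3.trans b3.symm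
      have es : (n.2.2.1:ℤ) + n.2.2.2 = n'.2.2.1 + n'.2.2.2 := by
        have em' := em
        unfold od_m at em'
        rw [hnn, e2] at em'
        linarith
      have ep : (n.2.2.1:ℤ) * n.2.2.2 = n'.2.2.1 * n'.2.2.2 := by
        unfold od_U at eU
        rw [em, hnn, e2] at eU
        linarith
      have := od_sum_prod es ep (by exact_mod_cast hnS.2.2.2.1) (by exact_mod_cast hnS'.2.2.2.1)
      obtain ⟨f1, f2⟩ := this
      exact Prod.ext hnn (Prod.ext e2 (Prod.ext (by exact_mod_cast f1) (by exact_mod_cast f2)))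
    have hle : (S.filter (fun p => φ p = φ n0)).card ≤ (n0.1 * n0.2.1).divisors.card := by
      apply Finset.card_le_card_of_injOn _ _ hinj
      intro n hn
      rw [Finset.mem_coe, Nat.mem_divisors]
      exact ⟨⟨n.2.1, (hsame n hn).1.symm⟩, by positivity⟩
    exact_mod_cast hle
  rw [htot]
  calc _ ≤ ∑ i ∈ I, d0 := Finset.sum_le_sum hfib
    _ = I.card * d0 := by rw [Finset.sum_const, nsmul_eq_mul]
    _ ≤ _ := by gcongr

def od_Q (A1 A2 A3 A4 : ℕ) : Finset (ℕ × ℕ × ℕ × ℕ) :=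
  Finset.Ico A1 (2*A1) ×ˢ Finset.Ico A2 (2*A2) ×ˢ Finset.Ico A3 (2*A3) ×ˢ Finset.Ico A4 (2*A4)

/-- the size of `k` -/
lemma od_k_eq (n : ℕ × ℕ × ℕ × ℕ) : ((od_k n : ℤ) : ℝ) =
    od_De n * (2 * Real.sqrt n.1 + 2 * Real.sqrt n.2.1 - od_De n) * (2 * Real.sqrt n.2.2.1 - od_De n) *
    (2 * Real.sqrt n.1 + 2 * Real.sqrt n.2.1 + 2 * Real.sqrt n.2.2.1 - od_De n) *
    (2 * Real.sqrt n.1 - od_De n) * (2 * Real.sqrt n.2.1 - od_De n) *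
    (2 * Real.sqrt n.2.1 + 2 * Real.sqrt n.2.2.1 - od_De n) *
    (2 * Real.sqrt n.1 + 2 * Real.sqrt n.2.2.1 - od_De n) := by
  unfold od_k od_U od_m od_De
  obtain ⟨a, b, c, d⟩ := n
  simp only
  push_cast
  have ha := Real.sq_sqrt (show (0:ℝ) ≤ a by positivity)
  have hb := Real.sq_sqrt (show (0:ℝ) ≤ b by positivity)
  have hc := Real.sq_sqrt (show (0:ℝ) ≤ c by positivity)
  have hd := Real.sq_sqrt (show (0:ℝ) ≤ d by positivity)
  set x := Real.sqrt a
  set y := Real.sqrt b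
  set z := Real.sqrt c
  set w := Real.sqrt d
  rw [← ha, ← hb, ← hc, ← hd]
  ring

lemma od_regB_size {A1 A2 A3 A4 : ℕ} (h1 : 1 ≤ A1) (h12 : A1 ≤ A2) (h23 : A2 ≤ A3)
    {n : ℕ × ℕ × ℕ × ℕ} (hn : n ∈ od_Q A1 A2 A3 A4) (hD0 : od_De n ≠ 0) (hD1 : |od_De n| < 1) :
    od_k n ≠ 0 ∧ |((od_k n : ℤ):ℝ)| ≤ |od_De n| * (300000 * (Real.sqrt A1 * A2 * A3^2)) := by
  simp only [od_Q, Finset.mem_product] at hn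
  obtain ⟨m1, m2, m3, m4⟩ := hn
  have b1 := od_sqrt_blk m1
  have b2 := od_sqrt_blk m2
  have b3 := od_sqrt_blk m3
  have hs := od_sqrt_two.1
  have hA1 : (1:ℝ) ≤ Real.sqrt A1 := Real.one_le_sqrt.mpr (by exact_mod_cast h1)
  have l12 : Real.sqrt A1 ≤ Real.sqrt A2 := Real.sqrt_le_sqrt (by exact_mod_cast h12)
  have l23 : Real.sqrt A2 ≤ Real.sqrt A3 := Real.sqrt_le_sqrt (by exact_mod_cast h23)
  have hb1 : Real.sqrt 2 * Real.sqrt A1 ≤ 1.415 * Real.sqrt A1 := by gcongr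
  have hb2 : Real.sqrt 2 * Real.sqrt A2 ≤ 1.415 * Real.sqrt A2 := by gcongr
  have hb3 : Real.sqrt 2 * Real.sqrt A3 ≤ 1.415 * Real.sqrt A3 := by gcongr
  have q2 := Real.mul_self_sqrt (show (0:ℝ) ≤ A2 by positivity)
  have q3 := Real.mul_self_sqrt (show (0:ℝ) ≤ A3 by positivity)
  obtain ⟨d1, d2⟩ := abs_lt.mp hD1
  have hk := od_k_eq n
  set e := od_De n
  set x := Real.sqrt n.1
  set y := Real.sqrt n.2.1
  set z := Real.sqrt n.2.2.1
  set a := Real.sqrt A1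
  set b := Real.sqrt A2
  set c := Real.sqrt A3
  have f1 : 0 < 2 * x + 2 * y - e := by linarith
  have f2 : 0 < 2 * z - e := by linarith
  have f3 : 0 < 2 * x + 2 * y + 2 * z - e := by linarith
  have f4 : 0 < 2 * x - e := by linarith
  have f5 : 0 < 2 * y - e := by linarith
  have f6 : 0 < 2 * y + 2 * z - e := by linarith
  have f7 : 0 < 2 * x + 2 * z - e := by linarith
  constructor
  · intro h0
    rw [h0] at hk
    have : e * (2 * x + 2 * y - e) * (2 * z - e) * (2 * x + 2 * y + 2 * z - e) * (2 * x - e) *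
      (2 * y - e) * (2 * y + 2 * z - e) * (2 * x + 2 * z - e) ≠ 0 := by
      have := f1.ne'; have := f2.ne'; have := f3.ne'; have := f4.ne'
      have := f5.ne'; have := f6.ne'; have := f7.ne'
      positivity
    apply this
    rw [← hk]; simp
  · have g1 : 2 * x + 2 * y - e ≤ 7.1 * b := by linarith
    have g2 : 2 * z - e ≤ 4.25 * c := by linarith
    have g3 : 2 * x + 2 * y + 2 * z - e ≤ 9.91 * c := by linarith
    have g4 : 2 * x - e ≤ 4.25 * a := by linarith
    have g5 : 2 * y - e ≤ 4.25 * b := by linarith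
    have g6 : 2 * y + 2 * z - e ≤ 7.1 * c := by linarith
    have g7 : 2 * x + 2 * z - e ≤ 7.1 * c := by linarith
    have ha0 : 0 ≤ a := by linarith
    have hb0 : 0 ≤ b := by linarith
    have hc0 : 0 ≤ c := by linarith
    rw [hk]
    simp only [abs_mul, abs_of_pos f1, abs_of_pos f2, abs_of_pos f3, abs_of_pos f4, abs_of_pos f5,
      abs_of_pos f6, abs_of_pos f7]
    calc _ ≤ |e| * (7.1 * b) * (4.25 * c) * (9.91 * c) * (4.25 * a) * (4.25 * b) * (7.1 * c) * (7.1 * c) := by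
          gcongr
      _ = (7.1 * 4.25 * 9.91 * 4.25 * 4.25 * 7.1 * 7.1) * (|e| * (a * (b * b) * (c * c)^2)) := by ring
      _ ≤ 300000 * (|e| * (a * (b * b) * (c * c)^2)) := by
          apply mul_le_mul_of_nonneg_right
          · norm_num
          · positivity
      _ = _ := by rw [q2, q3]; ring

lemma od_regB_geom {A1 A2 A3 A4 : ℕ} (h1 : 1 ≤ A1) (h12 : A1 ≤ A2) (h23 : A2 ≤ A3) (h34 : A4 ≤ 64 * A3)
    {n : ℕ × ℕ × ℕ × ℕ} (hn : n ∈ od_Q A1 A2 A3 A4) (hD1 : |od_De n| < 1) :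
    1 ≤ n.1 ∧ 1 ≤ n.2.1 ∧ n.1 * n.2.1 ≤ (520 * A3)^2 ∧ n.2.2.1 < n.2.2.2 ∧ 0 < od_m n ∧
      4 * od_m n ≤ ((520 * A3 : ℕ) : ℤ) ∧ |od_U n| ≤ ((520 * A3 : ℕ) : ℤ) * (4 * od_m n) := by
  simp only [od_Q, Finset.mem_product, Finset.mem_Ico] at hn
  obtain ⟨m1, m2, m3, m4⟩ := hn
  have hx1 : (1:ℝ) ≤ Real.sqrt n.1 := Real.one_le_sqrt.mpr (by exact_mod_cast h1.trans m1.1)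
  obtain ⟨d1, d2⟩ := abs_lt.mp hD1
  have hge : Real.sqrt n.2.1 + Real.sqrt n.2.2.1 ≤ Real.sqrt n.2.2.2 := by
    unfold od_De at d1 d2
    linarith
  have hy0 := Real.sqrt_nonneg (n.2.1:ℝ)
  have hz0 := Real.sqrt_nonneg (n.2.2.1:ℝ)
  have q2 := Real.sq_sqrt (show (0:ℝ) ≤ n.2.1 by positivity)
  have q3 := Real.sq_sqrt (show (0:ℝ) ≤ n.2.2.1 by positivity)
  have q4 := Real.sq_sqrt (show (0:ℝ) ≤ n.2.2.2 by positivity)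
  have hsq : (Real.sqrt n.2.1 + Real.sqrt n.2.2.1)^2 ≤ (Real.sqrt n.2.2.2)^2 :=
    pow_le_pow_left₀ (by positivity) hge 2
  have hyz : (n.1:ℝ) / 2 ≤ Real.sqrt n.2.1 * Real.sqrt n.2.2.1 := by
    have u1 : Real.sqrt ((n.1:ℝ)/2) ≤ Real.sqrt n.2.1 := by
      apply Real.sqrt_le_sqrt
      have : (n.1:ℝ) ≤ 2 * n.2.1 := by exact_mod_cast (by omega : n.1 ≤ 2 * n.2.1)
      linarith
    have u2 : Real.sqrt ((n.1:ℝ)/2) ≤ Real.sqrt n.2.2.1 := by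
      apply Real.sqrt_le_sqrt
      have : (n.1:ℝ) ≤ 2 * n.2.2.1 := by exact_mod_cast (by omega : n.1 ≤ 2 * n.2.2.1)
      linarith
    calc (n.1:ℝ)/2 = Real.sqrt ((n.1:ℝ)/2) * Real.sqrt ((n.1:ℝ)/2) :=
          (Real.mul_self_sqrt (by positivity)).symm
      _ ≤ _ := mul_le_mul u1 u2 (Real.sqrt_nonneg _) hy0
  have hn4 : (n.2.1:ℝ) + n.2.2.1 + n.1 ≤ n.2.2.2 := by nlinarith
  have hn4' : n.2.1 + n.2.2.1 + n.1 ≤ n.2.2.2 := by exact_mod_cast hn4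
  have hm : (2 * n.2.2.1 : ℤ) ≤ od_m n := by unfold od_m; omega
  have hm2 : od_m n ≤ 130 * A3 := by unfold od_m; omega
  have hA3 : (A3:ℤ) ≤ n.2.2.1 := by exact_mod_cast m3.1
  refine ⟨by omega, by omega, ?_, by omega, by omega, by push_cast; linarith, ?_⟩
  · calc n.1 * n.2.1 ≤ (520 * A3) * (520 * A3) := Nat.mul_le_mul (by omega) (by omega)
      _ = _ := by ring
  · unfold od_U
    have hA0 : (0:ℤ) ≤ A3 := by positivity
    have p1 : (n.1:ℤ) * n.2.1 ≤ (2 * A3) * (2 * A3) := by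
      apply mul_le_mul <;> first | omega | positivity
    have p2 : (n.2.2.1:ℤ) * n.2.2.2 ≤ (2 * A3) * (128 * A3) := by
      apply mul_le_mul <;> first | omega | positivity
    have p3 : (0:ℤ) ≤ (n.1:ℤ) * n.2.1 := by positivity
    have p4 : (0:ℤ) ≤ (n.2.2.1:ℤ) * n.2.2.2 := by positivity
    have p5 : od_m n ^2 ≤ 130 * A3 * od_m n := by
      rw [sq]; apply mul_le_mul_of_nonneg_right hm2; omega
    have p6 : (A3:ℤ) * (2 * A3) ≤ A3 * od_m n := by
      apply mul_le_mul_of_nonneg_left _ hA0; omega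
    have p7 : 0 ≤ od_m n ^2 := sq_nonneg _
    push_cast
    rw [abs_le]
    constructor <;> nlinarith

/-- regime B estimate -/
lemma od_regB {A1 A2 A3 A4 : ℕ} (h1 : 1 ≤ A1) (h12 : A1 ≤ A2) (h23 : A2 ≤ A3) (h34 : A4 ≤ 64 * A3)
    (d0 : ℝ) (hd0 : ∀ n : ℕ, 1 ≤ n → n ≤ 300000 * A3^4 → (n.divisors.card : ℝ) ≤ d0) :
    ∑ n ∈ (od_Q A1 A2 A3 A4).filter (fun n => od_De n ≠ 0 ∧ |od_De n| < 1), 1 / |od_De n| ≤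
      (300000 * (Real.sqrt A1 * A2 * A3^2)) *
      (2 * (d0 * d0 * (4 * (520 * A3 : ℕ) * (1 + Real.log (520 * A3 : ℕ)) + (520 * A3 : ℕ)) * d0) *
      (2 * (1 + Real.log ((300000 * A3^4 : ℕ) + 1)))) := by
  set S := (od_Q A1 A2 A3 A4).filter (fun n => od_De n ≠ 0 ∧ |od_De n| < 1) with hS
  set R0 : ℝ := 300000 * (Real.sqrt A1 * A2 * A3^2) with hR0
  have hA3 : 1 ≤ A3 := by omega
  set G : ℝ := d0 * d0 * (4 * (520 * A3 : ℕ) * (1 + Real.log (520 * A3 : ℕ)) + (520 * A3 : ℕ)) * d0 with hG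
  have hd1 : 0 ≤ d0 := le_trans (by positivity) (hd0 1 le_rfl (by nlinarith [Nat.one_le_pow 4 A3 hA3]))
  have hlog : 0 ≤ Real.log (520 * A3 : ℕ) := Real.log_natCast_nonneg _
  have hG0 : 0 ≤ G := by positivity
  have hR00 : 0 ≤ R0 := by positivity
  have hR0le : R0 ≤ ((300000 * A3^4 : ℕ):ℝ) := by
    have l1 : Real.sqrt A1 ≤ A3 := by
      rw [Real.sqrt_le_left (by positivity)]
      have : (A1:ℝ) ≤ A3 := by exact_mod_cast h12.trans h23
      have : (1:ℝ) ≤ A3 := by exact_mod_cast hA3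
      nlinarith
    have l2 : (A2:ℝ) ≤ A3 := by exact_mod_cast h23
    push_cast
    calc R0 ≤ 300000 * ((A3:ℝ) * A3 * A3^2) := by rw [hR0]; gcongr
      _ = _ := by ring
  have hpt : ∀ n ∈ S, od_k n ≠ 0 ∧ |((od_k n : ℤ):ℝ)| ≤ |od_De n| * R0 ∧ |od_De n| < 1 := by
    intro n hn
    rw [hS, Finset.mem_filter] at hn
    have := od_regB_size h1 h12 h23 hn.1 hn.2.1 hn.2.2
    exact ⟨this.1, this.2, hn.2.2⟩
  have hkb : ∀ n ∈ S, (od_k n).natAbs ≤ 300000 * A3^4 := by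
    intro n hn
    obtain ⟨p1, p2, p3⟩ := hpt n hn
    have : ((od_k n).natAbs : ℝ) ≤ ((300000 * A3^4 : ℕ):ℝ) := by
      rw [Nat.cast_natAbs, Int.cast_abs]
      calc _ ≤ |od_De n| * R0 := p2
        _ ≤ 1 * R0 := by gcongr
        _ ≤ _ := by linarith
    exact_mod_cast this
  have hone : ∀ n ∈ S, 1 / |od_De n| ≤ R0 * (2 / (1 + |((od_k n : ℤ):ℝ)|)) := by
    intro n hn
    obtain ⟨p1, p2, p3⟩ := hpt n hn
    have hk1 : (1:ℝ) ≤ |((od_k n : ℤ):ℝ)| := by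
      rw [← Int.cast_abs]; exact_mod_cast Int.one_le_abs p1
    have hDpos : 0 < |od_De n| := by
      rw [hS, Finset.mem_filter] at hn
      exact abs_pos.mpr hn.2.1
    rw [← mul_div_assoc, div_le_div_iff₀ hDpos (by linarith)]
    nlinarith
  set V := S.image od_k with hV
  have hfib : ∀ k ∈ V, ((S.filter (fun n => od_k n = k)).card : ℝ) ≤ G := by
    intro k hk
    simp only [hV, Finset.mem_image] at hk
    obtain ⟨n0, hn0, rfl⟩ := hk
    apply od_quad_fiber _ (520 * A3) (od_k n0) (hpt n0 hn0).1 d0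
    · intro n hn1 hn2
      apply hd0 n hn1 (hn2.trans _)
      have : A3^2 ≤ A3^4 := Nat.pow_le_pow_right hA3 (by norm_num)
      nlinarith
    · exact hd0 _ (Int.natAbs_pos.mpr (hpt n0 hn0).1) (hkb n0 hn0)
    · omega
    · intro n hn
      rw [Finset.mem_filter] at hn
      have hn' := Finset.mem_filter.mp hn.1
      obtain ⟨g1, g2, g3, g4, g5, g6, g7⟩ := od_regB_geom h1 h12 h23 h34 hn'.1 hn'.2.2
      exact ⟨g1, g2, g3, g4, g5, g6, g7, hn.2⟩
  calc _ ≤ ∑ n ∈ S, R0 * (2 / (1 + |((od_k n : ℤ):ℝ)|)) := Finset.sum_le_sum hone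
    _ = R0 * ∑ n ∈ S, 2 / (1 + |((od_k n : ℤ):ℝ)|) := by rw [Finset.mul_sum]
    _ = R0 * ∑ k ∈ V, ∑ n ∈ S.filter (fun n => od_k n = k), 2 / (1 + |((od_k n : ℤ):ℝ)|) := by
        rw [Finset.sum_fiberwise_of_maps_to (fun n hn => Finset.mem_image_of_mem _ hn)]
    _ = R0 * ∑ k ∈ V, ((S.filter (fun n => od_k n = k)).card : ℝ) * (2 / (1 + |((k : ℤ):ℝ)|)) := by
        congr 1
        apply Finset.sum_congr rfl
        intro k _
        rw [← nsmul_eq_mul, ← Finset.sum_const]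
        apply Finset.sum_congr rfl
        intro n hn
        rw [(Finset.mem_filter.mp hn).2]
    _ ≤ R0 * ∑ k ∈ V, G * (2 / (1 + |((k : ℤ):ℝ)|)) := by
        gcongr with k hk
        exact hfib k hk
    _ = R0 * (2 * G * ∑ k ∈ V, 1 / (1 + |((k : ℤ):ℝ)|)) := by
        congr 1
        rw [Finset.mul_sum]
        apply Finset.sum_congr rfl
        intro k _
        ring
    _ ≤ _ := by
        have := od_harm_int (300000 * A3^4) V (by
          intro k hk
          simp only [hV, Finset.mem_image] at hk
          obtain ⟨n0, hn0, rfl⟩ := hk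
          exact hkb n0 hn0)
        gcongr

def od_g (t : ℝ) (n : ℕ × ℕ × ℕ × ℕ) : ℝ := if od_De n ≠ 0 then min t (1 / |od_De n|) else 0

lemma od_g_nonneg {t : ℝ} (ht : 0 ≤ t) (n : ℕ × ℕ × ℕ × ℕ) : 0 ≤ od_g t n := by
  unfold od_g; split_ifs <;> positivity

lemma od_regC_sum (A1 A2 A3 A4 : ℕ) (τ M : ℝ) (hτ : 1 ≤ τ)
    (h1 : Real.sqrt A1 ≤ τ^3) (h2 : Real.sqrt A2 ≤ τ^3)
    (h3 : Real.sqrt A3 ≤ τ^3) (h4 : Real.sqrt A4 ≤ τ^3)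
    (hM : ∀ k : ℤ, ((((od_P A1 A4) ×ˢ (od_P A2 A3)).filter
      (fun p => od_W 1 (1/(8*τ^4)) p.2 - od_W (-1) (1/(8*τ^4)) p.1 = k)).card : ℝ) ≤ M) :
    ∑ n ∈ od_Q A1 A2 A3 A4, od_g (τ^4) n ≤ 32 * τ^4 * M * (2 * (1 + Real.log (⌈50 * τ^7⌉₊ + 1))) := by
  set D : ℝ := 1/(8*τ^4) with hD
  have hτ0 : 0 < τ := by linarith
  have hD0 : 0 < D := by positivity
  have htD : τ^4 = 1 / (8 * D) := by
    have h8 : 8 * τ^4 ≠ 0 := by positivity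
    rw [eq_div_iff (by positivity), hD]
    calc τ^4 * (8 * (1/(8*τ^4))) = (8 * τ^4) * (1/(8*τ^4)) := by ring
      _ = 1 := mul_one_div_cancel h8
  have hM0 : 0 ≤ M := (Nat.cast_nonneg _).trans (hM 0)
  set κ : ℕ × ℕ × ℕ × ℕ → ℤ := fun n => od_W 1 D (n.2.1, n.2.2.1) - od_W (-1) D (n.1, n.2.2.2) with hκ
  have hclose : ∀ n, |od_De n / D - κ n| ≤ 1 := by
    intro n
    have e : od_De n / D = od_f 1 (n.2.1, n.2.2.1) / D - od_f (-1) (n.1, n.2.2.2) / D := by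
      rw [← sub_div]; congr 1; unfold od_De od_f; simp only; ring
    simp only [hκ]
    push_cast
    rw [e]
    unfold od_W
    have a1 := Int.floor_le (od_f 1 (n.2.1, n.2.2.1) / D)
    have a2 := Int.lt_floor_add_one (od_f 1 (n.2.1, n.2.2.1) / D)
    have a3 := Int.floor_le (od_f (-1) (n.1, n.2.2.2) / D)
    have a4 := Int.lt_floor_add_one (od_f (-1) (n.1, n.2.2.2) / D)
    rw [abs_le]
    constructor <;> linarith
  have hsz : ∀ n ∈ od_Q A1 A2 A3 A4, (κ n).natAbs ≤ ⌈50 * τ^7⌉₊ := by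
    intro n hn
    simp only [od_Q, Finset.mem_product] at hn
    obtain ⟨m1, m2, m3, m4⟩ := hn
    have hs := od_sqrt_two.1
    have b1 := (od_sqrt_blk m1).2
    have b2 := (od_sqrt_blk m2).2
    have b3 := (od_sqrt_blk m3).2
    have b4 := (od_sqrt_blk m4).2
    have c1 : Real.sqrt 2 * Real.sqrt A1 ≤ 1.415 * τ^3 := by gcongr
    have c2 : Real.sqrt 2 * Real.sqrt A2 ≤ 1.415 * τ^3 := by gcongr
    have c3 : Real.sqrt 2 * Real.sqrt A3 ≤ 1.415 * τ^3 := by gcongr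
    have c4 : Real.sqrt 2 * Real.sqrt A4 ≤ 1.415 * τ^3 := by gcongr
    have p1 := Real.sqrt_nonneg (n.1:ℝ)
    have p2 := Real.sqrt_nonneg (n.2.1:ℝ)
    have p3 := Real.sqrt_nonneg (n.2.2.1:ℝ)
    have p4 := Real.sqrt_nonneg (n.2.2.2:ℝ)
    have hDe : |od_De n| ≤ 4.25 * τ^3 := by
      unfold od_De
      rw [abs_le]; constructor <;> linarith
    have h9 : |od_De n / D| ≤ 34 * τ^7 := by
      rw [abs_div, abs_of_pos hD0, div_le_iff₀ hD0, hD]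
      refine hDe.trans (le_of_eq ?_)
      field_simp; norm_num
    have h10 := hclose n
    have h11 : |(κ n : ℝ)| ≤ 50 * τ^7 := by
      have : (1:ℝ) ≤ τ^7 := one_le_pow₀ hτ
      have := abs_le.mp h9
      have := abs_le.mp h10
      rw [abs_le]; constructor <;> linarith
    have h12 : ((κ n).natAbs : ℝ) ≤ (⌈50 * τ^7⌉₊ : ℝ) := by
      rw [Nat.cast_natAbs, Int.cast_abs]
      exact h11.trans (Nat.le_ceil _)
    exact_mod_cast h12
  have hone : ∀ n, od_g (τ^4) n ≤ 32 * τ^4 * (1 / (1 + |(κ n : ℝ)|)) := by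
    intro n
    have hk0 : 0 ≤ |(κ n : ℝ)| := abs_nonneg _
    unfold od_g
    split_ifs with hne
    · have hdp : 0 < |od_De n| := abs_pos.mpr hne
      rw [htD]
      rcases le_or_gt |(κ n : ℝ)| 2 with hle | hgt
      · refine (min_le_left _ _).trans ?_
        rw [← htD]
        have : (1:ℝ)/3 ≤ 1 / (1 + |(κ n : ℝ)|) := by
          apply one_div_le_one_div_of_le <;> linarith
        nlinarith [pow_pos hτ0 4]
      · refine (min_le_right _ _).trans ?_
        have h5 : |(κ n : ℝ)| - 1 ≤ |od_De n| / D := by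
          have := hclose n
          have h6 := abs_sub_abs_le_abs_sub (κ n : ℝ) (od_De n / D)
          rw [abs_sub_comm, abs_div, abs_of_pos hD0] at h6
          linarith
        rw [le_div_iff₀ hD0] at h5
        rw [show 32 * (1 / (8 * D)) * (1 / (1 + |(κ n : ℝ)|)) = 4 / (D * (1 + |(κ n : ℝ)|)) by
          field_simp; norm_num]
        rw [div_le_div_iff₀ hdp (by positivity)]
        nlinarith
    · positivity
  set V := (od_Q A1 A2 A3 A4).image κ with hV
  have hfib : ∀ k ∈ V, (((od_Q A1 A2 A3 A4).filter (fun n => κ n = k)).card : ℝ) ≤ M := by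
    intro k _
    refine le_trans ?_ (hM k)
    have hinj : Set.InjOn (fun n : ℕ × ℕ × ℕ × ℕ => (((n.1, n.2.2.2), (n.2.1, n.2.2.1)) : (ℕ × ℕ) × (ℕ × ℕ)))
        ((od_Q A1 A2 A3 A4).filter (fun n => κ n = k) : Finset (ℕ × ℕ × ℕ × ℕ)) := by
      rintro ⟨a, b, c, d⟩ _ ⟨a', b', c', d'⟩ _ h
      simp only [Prod.mk.injEq] at h ⊢
      tauto
    have := Finset.card_le_card_of_injOn (s := (od_Q A1 A2 A3 A4).filter (fun n => κ n = k))
      (t := ((od_P A1 A4) ×ˢ (od_P A2 A3)).filter (fun p => od_W 1 D p.2 - od_W (-1) D p.1 = k)) _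
      (by
        intro n hn
        simp only [Finset.coe_filter, Set.mem_ofPred_eq, od_Q, od_P, Finset.mem_product] at hn ⊢
        exact ⟨⟨⟨hn.1.1, hn.1.2.2.2⟩, hn.1.2.1, hn.1.2.2.1⟩, hn.2⟩) hinj
    exact_mod_cast this
  calc _ ≤ ∑ n ∈ od_Q A1 A2 A3 A4, 32 * τ^4 * (1 / (1 + |(κ n : ℝ)|)) := Finset.sum_le_sum (fun n _ => hone n)
    _ = 32 * τ^4 * ∑ n ∈ od_Q A1 A2 A3 A4, 1 / (1 + |(κ n : ℝ)|) := by rw [Finset.mul_sum]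
    _ = 32 * τ^4 * ∑ k ∈ V, ∑ n ∈ (od_Q A1 A2 A3 A4).filter (fun n => κ n = k), 1 / (1 + |(κ n : ℝ)|) := by
        rw [Finset.sum_fiberwise_of_maps_to (fun n hn => Finset.mem_image_of_mem _ hn)]
    _ = 32 * τ^4 * ∑ k ∈ V, (((od_Q A1 A2 A3 A4).filter (fun n => κ n = k)).card : ℝ) * (1 / (1 + |((k : ℤ):ℝ)|)) := by
        congr 1
        apply Finset.sum_congr rfl
        intro k _
        rw [← nsmul_eq_mul, ← Finset.sum_const]
        apply Finset.sum_congr rfl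
        intro n hn
        rw [(Finset.mem_filter.mp hn).2]
    _ ≤ 32 * τ^4 * ∑ k ∈ V, M * (1 / (1 + |((k : ℤ):ℝ)|)) := by
        gcongr with k hk
        exact hfib k hk
    _ = 32 * τ^4 * M * ∑ k ∈ V, 1 / (1 + |((k : ℤ):ℝ)|) := by
        rw [← Finset.mul_sum]; ring
    _ ≤ _ := by
        have := od_harm_int ⌈50 * τ^7⌉₊ V (by
          intro k hk
          simp only [hV, Finset.mem_image] at hk
          obtain ⟨n0, hn0, rfl⟩ := hk
          exact hsz n0 hn0)
        gcongr

lemma od_poly {α β γ τ : ℝ} (hα : 1 ≤ α) (hαβ : α ≤ β) (hβγ : β ≤ γ) (hγτ : γ^2 ≤ τ)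
    (hreg : τ * α ≤ β * γ^6) :
    (400 * (α^18 * γ^12) + 331776 * (α^24 * γ^18) / τ^4) *
      (72 * (α^2 * β^20 * γ^8) + 648 * (β^24 * γ^18) / τ^4) ≤ (16000 * (α^9 * β^9 * γ^18) / τ)^2 ∧
    (4 + β^10 / (α^2 * γ^2)) * (64 * (α^12 * γ^12)) ≤ 320 * (α^9 * β^9 * γ^18) / τ := by
  have hα0 : 0 < α := by linarith
  have hβ1 : 1 ≤ β := by linarith
  have hβ0 : 0 < β := by linarith
  have hγ1 : 1 ≤ γ := by linarith
  have hγ0 : 0 < γ := by linarith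
  have hτ1 : 1 ≤ τ := le_trans (one_le_pow₀ hγ1) hγτ
  have hτ0 : 0 < τ := by linarith
  have k1 : τ * α * β ≤ γ^8 := by
    calc τ * α * β ≤ (β * γ^6) * β := by gcongr
      _ ≤ (γ * γ^6) * γ := by gcongr
      _ = γ^8 := by ring
  have k2 : α * β ≤ τ := by
    calc α * β ≤ γ * γ := by gcongr; linarith
      _ = γ^2 := by ring
      _ ≤ τ := hγτ
  set Z := α^18 * β^18 * γ^36 / τ^2 with hZ
  have t1 : (α^18 * γ^12) * (α^2 * β^20 * γ^8) ≤ Z := by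
    rw [hZ, le_div_iff₀ (by positivity)]
    calc _ = (τ * α * β)^2 * (α^18 * β^18 * γ^20) := by ring
      _ ≤ (γ^8)^2 * (α^18 * β^18 * γ^20) := by gcongr
      _ = _ := by ring
  have t2 : (α^18 * γ^12) * ((β^24 * γ^18) / τ^4) ≤ Z := by
    rw [hZ, ← mul_div_assoc, div_le_div_iff₀ (by positivity) (by positivity)]
    calc _ = (1 * β^6) * (α^18 * β^18 * γ^30 * τ^2) := by ring
      _ ≤ (τ^2 * γ^6) * (α^18 * β^18 * γ^30 * τ^2) := by gcongr; exact one_le_pow₀ hτ1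
      _ = _ := by ring
  have t3 : ((α^24 * γ^18) / τ^4) * (α^2 * β^20 * γ^8) ≤ Z := by
    rw [hZ, div_mul_eq_mul_div, div_le_div_iff₀ (by positivity) (by positivity)]
    calc _ = (1 * (α^8 * β^2)) * (α^18 * β^18 * γ^26 * τ^2) := by ring
      _ ≤ (τ^2 * (γ^8 * γ^2)) * (α^18 * β^18 * γ^26 * τ^2) := by
          gcongr
          · exact one_le_pow₀ hτ1
          · linarith
      _ = _ := by ring
  have t4 : ((α^24 * γ^18) / τ^4) * ((β^24 * γ^18) / τ^4) ≤ Z := by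
    rw [hZ, div_mul_div_comm, div_le_div_iff₀ (by positivity) (by positivity)]
    calc _ = (α * β)^6 * (α^18 * β^18 * γ^36 * τ^2) := by ring
      _ ≤ τ^6 * (α^18 * β^18 * γ^36 * τ^2) := by gcongr
      _ = _ := by ring
  have hZ0 : 0 ≤ Z := by positivity
  constructor
  · have e : (16000 * (α^9 * β^9 * γ^18) / τ)^2 = 256000000 * Z := by rw [hZ]; field_simp; norm_num
    rw [e]
    calc _ = 28800 * ((α^18 * γ^12) * (α^2 * β^20 * γ^8)) + 259200 * ((α^18 * γ^12) * ((β^24 * γ^18) / τ^4)) +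
        23887872 * (((α^24 * γ^18) / τ^4) * (α^2 * β^20 * γ^8)) +
        214990848 * (((α^24 * γ^18) / τ^4) * ((β^24 * γ^18) / τ^4)) := by ring
      _ ≤ _ := by linarith
  · have s1 : α^12 * γ^12 ≤ α^9 * β^9 * γ^18 / τ := by
      rw [le_div_iff₀ hτ0]
      calc _ = (τ * α) * α^2 * (α^9 * γ^12) := by ring
        _ ≤ (β * γ^6) * β^2 * (α^9 * γ^12) := by gcongr
        _ = β^3 * (α^9 * γ^18) := by ring
        _ ≤ β^9 * (α^9 * γ^18) := by
            gcongr ?_ * _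
            exact pow_le_pow_right₀ hβ1 (by norm_num)
        _ = _ := by ring
    have s2 : β^10 / (α^2 * γ^2) * (α^12 * γ^12) ≤ α^9 * β^9 * γ^18 / τ := by
      have e : β^10 / (α^2 * γ^2) * (α^12 * γ^12) = α^10 * β^10 * γ^10 := by field_simp
      rw [e, le_div_iff₀ hτ0]
      calc _ = (τ * α * β) * (α^9 * β^9 * γ^10) := by ring
        _ ≤ γ^8 * (α^9 * β^9 * γ^10) := by gcongr
        _ = _ := by ring
    rw [mul_div_assoc]
    linarith

lemma od_regC (A1 A2 A3 A4 : ℕ) (hA1 : 1 ≤ A1) (hA2 : 1 ≤ A2) (hA3 : 1 ≤ A3) (hA4 : 1 ≤ A4)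
    {α β γ τ : ℝ} (hα : 1 ≤ α) (hαβ : α ≤ β) (hβγ : β ≤ γ) (hγτ : γ^2 ≤ τ)
    (hreg : τ * α ≤ β * γ^6) (e1 : (A1:ℝ) = α^12) (e2 : (A2:ℝ) = β^12) (e3 : (A3:ℝ) = γ^12)
    (h34 : A4 ≤ 64 * A3) (h4 : Real.sqrt A4 ≤ τ^3) :
    ∑ n ∈ od_Q A1 A2 A3 A4, od_g (τ^4) n ≤
      32 * τ^4 * (16320 * (α^9 * β^9 * γ^18) / τ) * (2 * (1 + Real.log (⌈50 * τ^7⌉₊ + 1))) := by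
  have hα0 : 0 < α := by linarith
  have hβ1 : 1 ≤ β := by linarith
  have hβ0 : 0 < β := by linarith
  have hγ1 : 1 ≤ γ := by linarith
  have hγ0 : 0 < γ := by linarith
  have hτ1 : 1 ≤ τ := le_trans (one_le_pow₀ hγ1) hγτ
  have hτ0 : 0 < τ := by linarith
  have s1 : Real.sqrt A1 = α^6 := by
    rw [e1, show α^12 = (α^6)^2 by ring, Real.sqrt_sq (by positivity)]
  have s2 : Real.sqrt A2 = β^6 := by
    rw [e2, show β^12 = (β^6)^2 by ring, Real.sqrt_sq (by positivity)]
  have s3 : Real.sqrt A3 = γ^6 := by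
    rw [e3, show γ^12 = (γ^6)^2 by ring, Real.sqrt_sq (by positivity)]
  have hA4' : (A4:ℝ) ≤ 64 * γ^12 := by
    rw [← e3]; exact_mod_cast h34
  have s4 : Real.sqrt A4 ≤ 8 * γ^6 := by
    rw [Real.sqrt_le_left (by positivity)]
    refine hA4'.trans (le_of_eq (by ring))
  have g3 : γ^6 ≤ τ^3 := by
    calc γ^6 = (γ^2)^3 := by ring
      _ ≤ τ^3 := by gcongr
  have g2 : β^6 ≤ τ^3 := le_trans (by gcongr) g3
  have g1 : α^6 ≤ τ^3 := le_trans (by gcongr) g2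
  have hsm : ∀ x : ℝ, x ≤ τ^3 → 8 * (1/(8*τ^4)) * x ≤ 1 := by
    intro x hx
    have : 8 * (1/(8*τ^4)) * x = x / τ^4 := by field_simp
    rw [this, div_le_one (by positivity)]
    refine hx.trans ?_
    exact pow_le_pow_right₀ hτ1 (by norm_num)
  obtain ⟨p1, p2⟩ := od_poly hα hαβ hβγ hγτ hreg
  apply od_regC_sum A1 A2 A3 A4 τ _ hτ1 (by rw [s1]; exact g1) (by rw [s2]; exact g2)
    (by rw [s3]; exact g3) h4
  intro k
  set R : ℝ := 4 + β^10 / (α^2 * γ^2) with hR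
  have hR4 : 4 ≤ R := by
    have : 0 ≤ β^10 / (α^2 * γ^2) := by positivity
    linarith
  have hRlow : β^10 / (α^2 * γ^2) ≤ R := by linarith
  refine (od_Ek A1 A2 A3 A4 hA1 hA2 hA3 hA4 (1/(8*τ^4)) R (4 * α^6) (16000 * (α^9 * β^9 * γ^18) / τ)
    (by positivity) (hsm _ (by rw [s1]; exact g1)) (hsm _ (by rw [s2]; exact g2))
    (hsm _ (by rw [s3]; exact g3)) (hsm _ h4) hR4 ?_ (by positivity) k ?_).trans ?_
  · have : 1 ≤ α^6 := one_le_pow₀ hα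
    linarith
  · refine le_trans ?_ p1
    rw [s1, s2, s3, e1, e2, e3]
    apply mul_le_mul
    · have u1 : 4 * α^6 * (α^12 * A4) ≤ 256 * (α^18 * γ^12) := by
        calc 4 * α^6 * (α^12 * A4) ≤ 4 * α^6 * (α^12 * (64 * γ^12)) := by gcongr
          _ = _ := by ring
      have u2 : 72 * ((α^12)^3 * (Real.sqrt A4 / α^6)) / (4 * α^6) ≤ 144 * (α^18 * γ^12) := by
        have : 72 * ((α^12)^3 * (Real.sqrt A4 / α^6)) / (4 * α^6) = 18 * α^24 * Real.sqrt A4 := by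
          field_simp; norm_num
        rw [this]
        calc 18 * α^24 * Real.sqrt A4 ≤ 18 * α^24 * (8 * γ^6) := by gcongr
          _ = 144 * (α^18 * α^6 * γ^6) := by ring
          _ ≤ 144 * (α^18 * γ^6 * γ^6) := by gcongr; linarith
          _ = _ := by ring
      have u3 : 5184 * (1/(8*τ^4)) * (α^12)^2 * (A4 * Real.sqrt A4) ≤ 331776 * (α^24 * γ^18) / τ^4 := by
        calc 5184 * (1/(8*τ^4)) * (α^12)^2 * (A4 * Real.sqrt A4) ≤
            5184 * (1/(8*τ^4)) * (α^12)^2 * ((64 * γ^12) * (8 * γ^6)) := by gcongr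
          _ = _ := by field_simp; norm_num
      linarith
    · apply add_le_add
      · have : 72 * ((β^12)^3 * (γ^6 / β^6)) / R ≤ 72 * ((β^12)^3 * (γ^6 / β^6)) / (β^10 / (α^2 * γ^2)) := by
          gcongr
        refine this.trans (le_of_eq ?_)
        field_simp
      · apply le_of_eq
        field_simp; norm_num
    · positivity
    · positivity
  · rw [e1]
    have : R * (α^12 * A4) ≤ R * (64 * (α^12 * γ^12)) := by
      calc R * (α^12 * A4) ≤ R * (α^12 * (64 * γ^12)) := by gcongr
        _ = _ := by ring
    have h9 : 16320 * (α^9 * β^9 * γ^18) / τ = 320 * (α^9 * β^9 * γ^18) / τ + 16000 * (α^9 * β^9 * γ^18) / τ := by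
      ring
    linarith

lemma od_Q_card (A1 A2 A3 A4 : ℕ) : ((od_Q A1 A2 A3 A4).card : ℝ) = A1 * (A2 * (A3 * A4)) := by
  unfold od_Q
  simp only [Finset.card_product, Nat.card_Ico]
  have h : ∀ A : ℕ, 2 * A - A = A := by intro A; omega
  simp only [h]; push_cast; ring

/-- trivial bound -/
lemma od_triv (A1 A2 A3 A4 : ℕ) (t c : ℝ) (hc : 0 < c)
    (h : ∀ n ∈ od_Q A1 A2 A3 A4, c ≤ |od_De n|) :
    ∑ n ∈ od_Q A1 A2 A3 A4, od_g t n ≤ A1 * (A2 * (A3 * A4)) / c := by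
  rw [← od_Q_card, div_eq_mul_one_div, ← nsmul_eq_mul, ← Finset.sum_const]
  apply Finset.sum_le_sum
  intro n hn
  unfold od_g
  split_ifs
  · exact (min_le_right _ _).trans (one_div_le_one_div_of_le hc (h n hn))
  · positivity

lemma od_triv_B (A1 A2 A3 A4 : ℕ) (t : ℝ) :
    ∑ n ∈ od_Q A1 A2 A3 A4, od_g t n ≤ A1 * (A2 * (A3 * A4)) +
     ∑ n ∈ (od_Q A1 A2 A3 A4).filter (fun n => od_De n ≠ 0 ∧ |od_De n| < 1), 1 / |od_De n| := by
  rw [Finset.sum_filter]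
  have : ((A1 * (A2 * (A3 * A4)) : ℝ)) = ∑ n ∈ od_Q A1 A2 A3 A4, (1:ℝ) := by
    rw [← od_Q_card]; simp
  rw [this, ← Finset.sum_add_distrib]
  apply Finset.sum_le_sum
  intro n hn
  unfold od_g
  by_cases h0 : od_De n ≠ 0
  · rw [if_pos h0]
    by_cases h1 : |od_De n| < 1
    · rw [if_pos ⟨h0, h1⟩]
      have := min_le_right t (1 / |od_De n|)
      linarith
    · rw [if_neg (fun h => h1 h.2), add_zero]
      refine (min_le_right _ _).trans ?_
      rw [div_le_one (abs_pos.mpr h0)]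
      exact not_lt.mp h1
  · rw [if_neg h0, if_neg (fun h => h0 h.1)]; norm_num

lemma od_le_of_pow12 {x y c : ℝ} (hy : 0 ≤ y) (hc : 0 ≤ c) (C : ℝ)
    (hC : C ≤ c^12) (h : x^12 ≤ C * y^12) : x ≤ c * y := by
  apply le_of_pow_le_pow_left₀ (n := 12) (by norm_num) (by positivity)
  calc x^12 ≤ C * y^12 := h
    _ ≤ c^12 * y^12 := by gcongr
    _ = _ := by ring

set_option maxHeartbeats 4000000 in
/-- the block bound, sorted case -/
lemma od_BB_sorted (A1 A2 A3 A4 : ℕ) (hA1 : 1 ≤ A1) (h12 : A1 ≤ A2) (h23 : A2 ≤ A3) (hA4 : 1 ≤ A4)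
    {α β γ ω τ K : ℝ} (hα : 1 ≤ α) (hβ : 1 ≤ β) (hγ : 1 ≤ γ) (hω : 1 ≤ ω) (hK : 1 ≤ K)
    (e1 : (A1:ℝ) = α^12) (e2 : (A2:ℝ) = β^12) (e3 : (A3:ℝ) = γ^12) (e4 : (A4:ℝ) = ω^12)
    (hγτ : γ^2 ≤ τ) (hωτ : ω^2 ≤ τ)
    (hKd : ∀ n : ℕ, 1 ≤ n → (n:ℝ) ≤ 400000 * τ^24 → (n.divisors.card : ℝ) ≤ K ∧ 1 + Real.log n ≤ K) :
    ∑ n ∈ od_Q A1 A2 A3 A4, od_g (τ^4) n ≤ 10^11 * K^5 * (τ^3 * (α^9 * β^9 * γ^9 * ω^9)) := by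
  have hα0 : 0 < α := by linarith
  have hβ0 : 0 < β := by linarith
  have hγ0 : 0 < γ := by linarith
  have hω0 : 0 < ω := by linarith
  have hτ1 : 1 ≤ τ := le_trans (one_le_pow₀ hγ) hγτ
  have hτ0 : 0 < τ := by linarith
  have hK0 : 0 < K := by linarith
  have hαβ : α ≤ β := by
    have := od_le_of_pow12 (x := α) (y := β) (c := 1) (by positivity) (by norm_num) 1 (by norm_num)
      (by rw [← e1, ← e2, one_mul]; exact_mod_cast h12)
    linarith
  have hβγ : β ≤ γ := by
    have := od_le_of_pow12 (x := β) (y := γ) (c := 1) (by positivity) (by norm_num) 1 (by norm_num)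
      (by rw [← e2, ← e3, one_mul]; exact_mod_cast h23)
    linarith
  have hαγ : α ≤ γ := hαβ.trans hβγ
  have s1 : Real.sqrt A1 = α^6 := by
    rw [e1, show α^12 = (α^6)^2 by ring, Real.sqrt_sq (by positivity)]
  have s2 : Real.sqrt A2 = β^6 := by
    rw [e2, show β^12 = (β^6)^2 by ring, Real.sqrt_sq (by positivity)]
  have s3 : Real.sqrt A3 = γ^6 := by
    rw [e3, show γ^12 = (γ^6)^2 by ring, Real.sqrt_sq (by positivity)]
  have s4 : Real.sqrt A4 = ω^6 := by
    rw [e4, show ω^12 = (ω^6)^2 by ring, Real.sqrt_sq (by positivity)]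
  have g3 : γ^6 ≤ τ^3 := by
    calc γ^6 = (γ^2)^3 := by ring
      _ ≤ τ^3 := by gcongr
  have g4 : ω^6 ≤ τ^3 := by
    calc ω^6 = (ω^2)^3 := by ring
      _ ≤ τ^3 := by gcongr
  have l12 : α^6 ≤ β^6 := by gcongr
  have l23 : β^6 ≤ γ^6 := by gcongr
  have hK5 : 1 ≤ K^5 := one_le_pow₀ hK
  set Pr := α^9 * β^9 * γ^9 * ω^9 with hPr
  have hPr0 : 0 < Pr := by positivity
  have hs := od_sqrt_two.1
  have hblk : ∀ n ∈ od_Q A1 A2 A3 A4, Real.sqrt n.1 ≤ 1.415 * α^6 ∧ Real.sqrt n.2.1 ≤ 1.415 * β^6 ∧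
      Real.sqrt n.2.2.1 ≤ 1.415 * γ^6 ∧ Real.sqrt n.2.2.2 ≤ 1.415 * ω^6 ∧
      γ^6 ≤ Real.sqrt n.2.2.1 ∧ ω^6 ≤ Real.sqrt n.2.2.2 := by
    intro n hn
    simp only [od_Q, Finset.mem_product] at hn
    obtain ⟨m1, m2, m3, m4⟩ := hn
    have b1 := od_sqrt_blk m1
    have b2 := od_sqrt_blk m2
    have b3 := od_sqrt_blk m3
    have b4 := od_sqrt_blk m4
    rw [s1] at b1; rw [s2] at b2; rw [s3] at b3; rw [s4] at b4
    have c1 : Real.sqrt 2 * α^6 ≤ 1.415 * α^6 := by gcongr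
    have c2 : Real.sqrt 2 * β^6 ≤ 1.415 * β^6 := by gcongr
    have c3 : Real.sqrt 2 * γ^6 ≤ 1.415 * γ^6 := by gcongr
    have c4 : Real.sqrt 2 * ω^6 ≤ 1.415 * ω^6 := by gcongr
    exact ⟨b1.2.trans c1, b2.2.trans c2, b3.2.trans c3, b4.2.trans c4, b3.1, b4.1⟩
  -- a final comparison
  have hfinal : ∀ (c : ℝ), 0 ≤ c → c ≤ 10^11 → c * (τ^3 * Pr) ≤ 10^11 * K^5 * (τ^3 * Pr) := by
    intro c hc0 hc
    apply mul_le_mul_of_nonneg_right _ (by positivity)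
    nlinarith
  by_cases hX : 64 * A3 ≤ A4
  · -- case X
    have hX' : 8 * γ^6 ≤ ω^6 := by
      rw [← s3, ← s4]
      apply Real.le_sqrt_of_sq_le
      rw [mul_pow, Real.sq_sqrt (by positivity)]
      norm_num
      exact_mod_cast hX
    have hγω : γ ≤ ω := by
      by_contra hc
      push Not at hc
      have : ω^6 ≤ γ^6 := by gcongr
      have : 0 < γ^6 := by positivity
      linarith
    refine (od_triv A1 A2 A3 A4 _ (0.46 * ω^6) (by positivity) ?_).trans ?_
    · intro n hn
      obtain ⟨q1, q2, q3, q4, q5, q6⟩ := hblk n hn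
      rw [le_abs]; right
      unfold od_De
      linarith
    · rw [e1, e2, e3, e4]
      refine le_trans ?_ (hfinal 3 (by norm_num) (by norm_num))
      rw [div_le_iff₀ (by positivity)]
      calc α^12 * (β^12 * (γ^12 * ω^12)) = Pr * (α^3 * β^3 * γ^3 * ω^3) := by rw [hPr]; ring
        _ ≤ Pr * (ω^3 * ω^3 * ω^3 * ω^3) := by
            have : α ≤ ω := by linarith
            have : β ≤ ω := by linarith
            gcongr
        _ = ω^6 * ω^6 * Pr := by ring
        _ ≤ τ^3 * ω^6 * Pr := by gcongr
        _ ≤ 3 * 0.46 * (τ^3 * ω^6 * Pr) := by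
            have : 0 ≤ τ^3 * ω^6 * Pr := by positivity
            linarith
        _ = _ := by ring
  by_cases hY : 8 * A4 ≤ A3
  · -- case Y
    have hY' : 2.82 * ω^6 ≤ γ^6 := by
      rw [← s3, ← s4]
      apply Real.le_sqrt_of_sq_le
      rw [mul_pow, Real.sq_sqrt (by positivity)]
      have : 8 * (A4:ℝ) ≤ A3 := by exact_mod_cast hY
      have : (0:ℝ) ≤ A4 := by positivity
      linarith
    have hγω : ω ≤ γ := by
      by_contra hc
      push Not at hc
      have : γ^6 ≤ ω^6 := by gcongr
      have : 0 < ω^6 := by positivity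
      linarith
    refine (od_triv A1 A2 A3 A4 _ (0.46 * γ^6) (by positivity) ?_).trans ?_
    · intro n hn
      obtain ⟨q1, q2, q3, q4, q5, q6⟩ := hblk n hn
      have p1 := Real.sqrt_nonneg (n.1:ℝ)
      have p2 := Real.sqrt_nonneg (n.2.1:ℝ)
      rw [le_abs]; left
      unfold od_De
      linarith
    · rw [e1, e2, e3, e4]
      refine le_trans ?_ (hfinal 3 (by norm_num) (by norm_num))
      rw [div_le_iff₀ (by positivity)]
      calc α^12 * (β^12 * (γ^12 * ω^12)) = Pr * (α^3 * β^3 * γ^3 * ω^3) := by rw [hPr]; ring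
        _ ≤ Pr * (γ^3 * γ^3 * γ^3 * γ^3) := by gcongr
        _ = γ^6 * γ^6 * Pr := by ring
        _ ≤ τ^3 * γ^6 * Pr := by gcongr
        _ ≤ 3 * 0.46 * (τ^3 * γ^6 * Pr) := by
            have : 0 ≤ τ^3 * γ^6 * Pr := by positivity
            linarith
        _ = _ := by ring
  push Not at hX hY
  have hωγ : ω ≤ 1.42 * γ := by
    apply od_le_of_pow12 (by positivity) (by norm_num) 64 (by norm_num)
    rw [← e3, ← e4]; exact_mod_cast hX.le
  have hγω : γ ≤ 1.2 * ω := by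
    apply od_le_of_pow12 (by positivity) (by norm_num) 8 (by norm_num)
    rw [← e3, ← e4]; exact_mod_cast hY.le
  have hγ9 : γ^9 ≤ 6 * ω^9 := by
    calc γ^9 ≤ (1.2 * ω)^9 := by gcongr
      _ = 1.2^9 * ω^9 := by ring
      _ ≤ 6 * ω^9 := by gcongr; norm_num
  have hPr2 : α^9 * β^9 * γ^18 ≤ 6 * Pr := by
    calc α^9 * β^9 * γ^18 = α^9 * β^9 * γ^9 * γ^9 := by ring
      _ ≤ α^9 * β^9 * γ^9 * (6 * ω^9) := by gcongr
      _ = _ := by rw [hPr]; ring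
  have hA3τ : (A3:ℝ) ≤ τ^6 := by
    rw [e3]
    calc γ^12 = (γ^2)^6 := by ring
      _ ≤ τ^6 := by gcongr
  have hτ24 : (1:ℝ) ≤ τ^24 := one_le_pow₀ hτ1
  have hA34 : (A3:ℝ)^4 ≤ τ^24 := by
    calc (A3:ℝ)^4 ≤ (τ^6)^4 := by gcongr
      _ = τ^24 := by ring
  by_cases hreg : β * γ^6 ≤ τ * α
  · -- regime B
    refine (od_triv_B A1 A2 A3 A4 _).trans ?_
    have hγ6 : γ^6 ≤ τ := by
      by_contra hc
      push Not at hc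
      have : τ * α < γ^6 * β := by
        calc τ * α < γ^6 * α := by gcongr
          _ ≤ γ^6 * β := by gcongr
      linarith
    have hpart1 : (A1 * (A2 * (A3 * A4)) : ℝ) ≤ 3 * (τ^3 * Pr) := by
      rw [e1, e2, e3, e4]
      have h4 : α * β * γ * ω ≤ 1.42 * τ := by
        calc α * β * γ * ω ≤ γ * γ * γ * (1.42 * γ) := by gcongr
          _ = 1.42 * γ^4 := by ring
          _ ≤ 1.42 * γ^6 := by
              gcongr ?_ * ?_
              exact pow_le_pow_right₀ hγ (by norm_num)
          _ ≤ _ := by gcongr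
      calc α^12 * (β^12 * (γ^12 * ω^12)) = (α * β * γ * ω)^3 * Pr := by rw [hPr]; ring
        _ ≤ (1.42 * τ)^3 * Pr := by gcongr
        _ = 1.42^3 * (τ^3 * Pr) := by ring
        _ ≤ _ := by gcongr; norm_num
    have hB := od_regB (A4 := A4) hA1 h12 h23 hX.le K (by
      intro n hn1 hn2
      refine (hKd n hn1 ?_).1
      have : (n:ℝ) ≤ 300000 * (A3:ℝ)^4 := by exact_mod_cast hn2
      linarith)
    have hl1 : 1 + Real.log (520 * A3 : ℕ) ≤ K := by
      refine (hKd (520 * A3) (by omega) ?_).2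
      push_cast
      have : τ^6 ≤ τ^24 := pow_le_pow_right₀ hτ1 (by norm_num)
      linarith
    have hl2 : 1 + Real.log ((300000 * A3^4 : ℕ) + 1) ≤ K := by
      have := (hKd (300000 * A3^4 + 1) (by omega) (by push_cast; linarith)).2
      rw [Nat.cast_add, Nat.cast_one] at this
      exact this
    have hl10 : 0 ≤ Real.log (520 * A3 : ℕ) := Real.log_natCast_nonneg _
    have hl20 : 0 ≤ Real.log ((300000 * A3^4 : ℕ) + 1) := by
      apply Real.log_nonneg
      have : (0:ℝ) ≤ ((300000 * A3^4 : ℕ):ℝ) := Nat.cast_nonneg _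
      linarith
    have hpart2 : ∑ n ∈ (od_Q A1 A2 A3 A4).filter (fun n => od_De n ≠ 0 ∧ |od_De n| < 1), 1 / |od_De n| ≤
        20000000000 * K^5 * (τ^3 * Pr) := by
      refine hB.trans ?_
      have hX0 : (4 * (520 * A3 : ℕ) * (1 + Real.log (520 * A3 : ℕ)) + (520 * A3 : ℕ) : ℝ) ≤ 2600 * γ^12 * K := by
        have hc : ((520 * A3 : ℕ):ℝ) = 520 * γ^12 := by push_cast; rw [e3]
        have h9 : ((520 * A3 : ℕ):ℝ) * (1 + Real.log (520 * A3 : ℕ)) ≤ 520 * γ^12 * K := by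
          rw [hc] at hl1 ⊢
          gcongr
        have h10 : ((520 * A3 : ℕ):ℝ) ≤ 520 * γ^12 * K := by
          rw [hc]
          exact le_mul_of_one_le_right (by positivity) hK
        linarith
      rw [s1, e2, e3]
      calc _ ≤ (300000 * (α^6 * β^12 * (γ^12)^2)) * (2 * (K * K * (2600 * γ^12 * K) * K) * (2 * K)) := by
            gcongr
        _ = 3120000000 * K^5 * (α^6 * β^9 * γ^18 * (β * γ^6)^3) := by ring
        _ ≤ 3120000000 * K^5 * (α^6 * β^9 * γ^18 * (τ * α)^3) := by gcongr
        _ = 3120000000 * K^5 * (τ^3 * (α^9 * β^9 * γ^18)) := by ring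
        _ ≤ 3120000000 * K^5 * (τ^3 * (6 * Pr)) := by gcongr
        _ = 18720000000 * (K^5 * (τ^3 * Pr)) := by ring
        _ ≤ 20000000000 * (K^5 * (τ^3 * Pr)) := by gcongr; norm_num
        _ = _ := by ring
    have h3 : 3 * (τ^3 * Pr) ≤ 3 * K^5 * (τ^3 * Pr) := by
      apply mul_le_mul_of_nonneg_right _ (by positivity)
      linarith
    have h4 : 0 ≤ K^5 * (τ^3 * Pr) := by positivity
    linarith
  · -- regime C
    push Not at hreg
    refine (od_regC A1 A2 A3 A4 hA1 (by omega) (by omega) hA4 hα hαβ hβγ hγτ hreg.le e1 e2 e3 hX.le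
      (by rw [s4]; exact g4)).trans ?_
    have hl : 1 + Real.log (⌈50 * τ^7⌉₊ + 1) ≤ K := by
      have := (hKd (⌈50 * τ^7⌉₊ + 1) (by omega) (by
        push_cast
        have h1 := Nat.ceil_lt_add_one (show 0 ≤ 50 * τ^7 by positivity)
        have h2 : τ^7 ≤ τ^24 := pow_le_pow_right₀ hτ1 (by norm_num)
        linarith)).2
      push_cast at this
      exact this
    have hKK : K ≤ K^5 := le_self_pow₀ hK (by norm_num)
    calc _ ≤ 32 * τ^4 * (16320 * (α^9 * β^9 * γ^18) / τ) * (2 * K) := by gcongr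
      _ = 1044480 * (τ^3 * (α^9 * β^9 * γ^18)) * K := by field_simp; ring
      _ ≤ 1044480 * (τ^3 * (6 * Pr)) * K^5 := by gcongr
      _ = 6266880 * (K^5 * (τ^3 * Pr)) := by ring
      _ ≤ 10^11 * (K^5 * (τ^3 * Pr)) := by gcongr; norm_num
      _ = _ := by ring

lemma od_swap12 (A1 A2 A3 A4 : ℕ) (t : ℝ) :
    ∑ n ∈ od_Q A1 A2 A3 A4, od_g t n = ∑ n ∈ od_Q A2 A1 A3 A4, od_g t n := by
  refine Finset.sum_nbij' (fun n => (n.2.1, n.1, n.2.2)) (fun n => (n.2.1, n.1, n.2.2)) ?_ ?_ ?_ ?_ ?_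
  · intro n hn
    simp only [od_Q, Finset.mem_product] at hn ⊢
    tauto
  · intro n hn
    simp only [od_Q, Finset.mem_product] at hn ⊢
    tauto
  · intro n _; rfl
  · intro n _; rfl
  · intro n _
    have : od_De (n.2.1, n.1, n.2.2) = od_De n := by
      unfold od_De; ring
    simp only [od_g, this]

lemma od_swap23 (A1 A2 A3 A4 : ℕ) (t : ℝ) :
    ∑ n ∈ od_Q A1 A2 A3 A4, od_g t n = ∑ n ∈ od_Q A1 A3 A2 A4, od_g t n := by
  refine Finset.sum_nbij' (fun n => (n.1, n.2.2.1, n.2.1, n.2.2.2))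
    (fun n => (n.1, n.2.2.1, n.2.1, n.2.2.2)) ?_ ?_ ?_ ?_ ?_
  · intro n hn
    simp only [od_Q, Finset.mem_product] at hn ⊢
    tauto
  · intro n hn
    simp only [od_Q, Finset.mem_product] at hn ⊢
    tauto
  · intro n _; rfl
  · intro n _; rfl
  · intro n _
    have : od_De (n.1, n.2.2.1, n.2.1, n.2.2.2) = od_De n := by
      unfold od_De; ring
    simp only [od_g, this]

/-- the block bound -/
lemma od_BB (A1 A2 A3 A4 : ℕ) (hA1 : 1 ≤ A1) (hA2 : 1 ≤ A2) (hA3 : 1 ≤ A3) (hA4 : 1 ≤ A4)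
    {α β γ ω τ K : ℝ} (hα : 1 ≤ α) (hβ : 1 ≤ β) (hγ : 1 ≤ γ) (hω : 1 ≤ ω) (hK : 1 ≤ K)
    (e1 : (A1:ℝ) = α^12) (e2 : (A2:ℝ) = β^12) (e3 : (A3:ℝ) = γ^12) (e4 : (A4:ℝ) = ω^12)
    (hατ : α^2 ≤ τ) (hβτ : β^2 ≤ τ) (hγτ : γ^2 ≤ τ) (hωτ : ω^2 ≤ τ)
    (hKd : ∀ n : ℕ, 1 ≤ n → (n:ℝ) ≤ 400000 * τ^24 → (n.divisors.card : ℝ) ≤ K ∧ 1 + Real.log n ≤ K) :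
    ∑ n ∈ od_Q A1 A2 A3 A4, od_g (τ^4) n ≤ 10^11 * K^5 * (τ^3 * (α^9 * β^9 * γ^9 * ω^9)) := by
  rcases le_total A1 A2 with h12 | h12 <;> rcases le_total A2 A3 with h23 | h23 <;>
    rcases le_total A1 A3 with h13 | h13
  · exact od_BB_sorted A1 A2 A3 A4 hA1 h12 h23 hA4 hα hβ hγ hω hK e1 e2 e3 e4 hγτ hωτ hKd
  · exact od_BB_sorted A1 A2 A3 A4 hA1 h12 h23 hA4 hα hβ hγ hω hK e1 e2 e3 e4 hγτ hωτ hKd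
  · rw [od_swap23]
    refine (od_BB_sorted A1 A3 A2 A4 hA1 h13 h23 hA4 hα hγ hβ hω hK e1 e3 e2 e4 hβτ hωτ hKd).trans
      (le_of_eq (by ring))
  · rw [od_swap23, od_swap12]
    refine (od_BB_sorted A3 A1 A2 A4 hA3 h13 h12 hA4 hγ hα hβ hω hK e3 e1 e2 e4 hβτ hωτ hKd).trans
      (le_of_eq (by ring))
  · rw [od_swap12]
    refine (od_BB_sorted A2 A1 A3 A4 hA2 h12 h13 hA4 hβ hα hγ hω hK e2 e1 e3 e4 hγτ hωτ hKd).trans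
      (le_of_eq (by ring))
  · rw [od_swap12, od_swap23]
    refine (od_BB_sorted A2 A3 A1 A4 hA2 h23 h13 hA4 hβ hγ hα hω hK e2 e3 e1 e4 hατ hωτ hKd).trans
      (le_of_eq (by ring))
  · rw [od_swap12, od_swap23, od_swap12]
    refine (od_BB_sorted A3 A2 A1 A4 hA3 h23 h12 hA4 hγ hβ hα hω hK e3 e2 e1 e4 hατ hωτ hKd).trans
      (le_of_eq (by ring))
  · rw [od_swap12, od_swap23, od_swap12]
    refine (od_BB_sorted A3 A2 A1 A4 hA3 h23 h12 hA4 hγ hβ hα hω hK e3 e2 e1 e4 hατ hωτ hKd).trans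
      (le_of_eq (by ring))

lemma od_K (δ : ℝ) (hδ : 0 < δ) : ∃ C : ℝ, 1 ≤ C ∧ ∀ τ : ℝ, 1 ≤ τ → ∀ n : ℕ, 1 ≤ n →
    (n:ℝ) ≤ 400000 * τ^24 → (n.divisors.card : ℝ) ≤ C * τ^δ ∧ 1 + Real.log n ≤ C * τ^δ := by
  obtain ⟨C1, hC1, h1⟩ := od_divisor_bound (δ/24) (by positivity)
  obtain ⟨C2, hC2, h2⟩ := od_log_bound (δ/24) (by positivity)
  have hM : (1:ℝ) ≤ (400000:ℝ)^(δ/24) := Real.one_le_rpow (by norm_num) (by positivity)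
  refine ⟨(C1 + C2) * (400000:ℝ)^(δ/24), ?_, ?_⟩
  · nlinarith
  intro τ hτ n hn hle
  have hn1 : (1:ℝ) ≤ n := by exact_mod_cast hn
  have hp : (n:ℝ)^(δ/24) ≤ (400000:ℝ)^(δ/24) * τ^δ := by
    calc (n:ℝ)^(δ/24) ≤ (400000 * τ^24)^(δ/24) := by
          apply Real.rpow_le_rpow (by positivity) hle (by positivity)
      _ = (400000:ℝ)^(δ/24) * (τ^24)^(δ/24) := Real.mul_rpow (by norm_num) (by positivity)
      _ = _ := by
          congr 1
          rw [← Real.rpow_natCast, ← Real.rpow_mul (by linarith)]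
          congr 1
          push_cast; ring
  have hp0 : 0 ≤ (400000:ℝ)^(δ/24) * τ^δ := by positivity
  constructor
  · calc _ ≤ C1 * (n:ℝ)^(δ/24) := h1 n hn
      _ ≤ C1 * ((400000:ℝ)^(δ/24) * τ^δ) := by gcongr
      _ ≤ _ := by nlinarith
  · calc _ ≤ C2 * (n:ℝ)^(δ/24) := h2 n hn1
      _ ≤ C2 * ((400000:ℝ)^(δ/24) * τ^δ) := by gcongr
      _ ≤ _ := by nlinarith

/-- the summand -/
def od_F (τ : ℝ) (n : ℕ × ℕ × ℕ × ℕ) : ℝ :=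
  ((n.1.divisors.card : ℝ) * n.2.1.divisors.card * n.2.2.1.divisors.card * n.2.2.2.divisors.card)
    / ((n.1:ℝ) * n.2.1 * n.2.2.1 * n.2.2.2)^((3:ℝ)/4) * (τ^12 * od_g (τ^4) n)

lemma od_root (A : ℕ) (hA : 1 ≤ A) (τ : ℝ) (hτ : 1 ≤ τ) (h : (A:ℝ) ≤ τ^6) :
    ∃ α : ℝ, 1 ≤ α ∧ (A:ℝ) = α^12 ∧ α^2 ≤ τ ∧ (A:ℝ)^((3:ℝ)/4) = α^9 := by
  have hA' : (1:ℝ) ≤ A := by exact_mod_cast hA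
  have e : (A:ℝ) = ((A:ℝ)^((1:ℝ)/12))^12 := by
    rw [← Real.rpow_natCast, ← Real.rpow_mul (by positivity)]
    norm_num
  refine ⟨(A:ℝ)^((1:ℝ)/12), Real.one_le_rpow hA' (by norm_num), e, ?_, ?_⟩
  · apply le_of_pow_le_pow_left₀ (n := 6) (by norm_num) (by linarith)
    rw [← pow_mul]
    rw [show 2 * 6 = 12 by norm_num, ← e]
    exact h
  · rw [← Real.rpow_natCast, ← Real.rpow_mul (by positivity)]
    norm_num

lemma od_blockF (a : ℕ × ℕ × ℕ × ℕ) {τ K : ℝ} (hτ : 1 ≤ τ) (hK : 1 ≤ K)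
    (h1 : 1 ≤ a.1) (h2 : 1 ≤ a.2.1) (h3 : 1 ≤ a.2.2.1) (h4 : 1 ≤ a.2.2.2)
    (t1 : (a.1:ℝ) ≤ τ^6) (t2 : (a.2.1:ℝ) ≤ τ^6) (t3 : (a.2.2.1:ℝ) ≤ τ^6) (t4 : (a.2.2.2:ℝ) ≤ τ^6)
    (hKd : ∀ n : ℕ, 1 ≤ n → (n:ℝ) ≤ 400000 * τ^24 → (n.divisors.card : ℝ) ≤ K ∧ 1 + Real.log n ≤ K) :
    ∑ n ∈ od_Q a.1 a.2.1 a.2.2.1 a.2.2.2, od_F τ n ≤ 10^11 * K^9 * τ^15 := by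
  obtain ⟨α, hα, e1, c1, p1⟩ := od_root _ h1 τ hτ t1
  obtain ⟨β, hβ, e2, c2, p2⟩ := od_root _ h2 τ hτ t2
  obtain ⟨γ, hγ, e3, c3, p3⟩ := od_root _ h3 τ hτ t3
  obtain ⟨ω, hω, e4, c4, p4⟩ := od_root _ h4 τ hτ t4
  have hα0 : 0 < α := by linarith
  have hβ0 : 0 < β := by linarith
  have hγ0 : 0 < γ := by linarith
  have hω0 : 0 < ω := by linarith
  have hτ0 : 0 < τ := by linarith
  have hK0 : 0 < K := by linarith
  have hd : ∀ A : ℕ, 1 ≤ A → (A:ℝ) ≤ τ^6 → ∀ n ∈ Finset.Ico A (2*A),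
      (n.divisors.card : ℝ) ≤ K ∧ (A:ℝ) ≤ n := by
    intro A hA hAt n hn
    rw [Finset.mem_Ico] at hn
    refine ⟨(hKd n (by omega) ?_).1, by exact_mod_cast hn.1⟩
    have : (n:ℝ) ≤ 2 * A := by exact_mod_cast hn.2.le
    have h6 : τ^6 ≤ τ^24 := pow_le_pow_right₀ hτ (by norm_num)
    have : 0 ≤ τ^6 := by positivity
    linarith
  have hstep : ∀ n ∈ od_Q a.1 a.2.1 a.2.2.1 a.2.2.2,
      od_F τ n ≤ K^4 / (α^9 * β^9 * γ^9 * ω^9) * (τ^12 * od_g (τ^4) n) := by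
    intro n hn
    simp only [od_Q, Finset.mem_product] at hn
    obtain ⟨m1, m2, m3, m4⟩ := hn
    obtain ⟨d1, l1⟩ := hd _ h1 t1 _ m1
    obtain ⟨d2, l2⟩ := hd _ h2 t2 _ m2
    obtain ⟨d3, l3⟩ := hd _ h3 t3 _ m3
    obtain ⟨d4, l4⟩ := hd _ h4 t4 _ m4
    have hg : 0 ≤ od_g (τ^4) n := od_g_nonneg (by positivity) n
    have hden : α^9 * β^9 * γ^9 * ω^9 ≤ ((n.1:ℝ) * n.2.1 * n.2.2.1 * n.2.2.2)^((3:ℝ)/4) := by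
      rw [Real.mul_rpow (by positivity) (by positivity), Real.mul_rpow (by positivity) (by positivity),
        Real.mul_rpow (by positivity) (by positivity), ← p1, ← p2, ← p3, ← p4]
      gcongr
    unfold od_F
    apply mul_le_mul_of_nonneg_right _ (by positivity)
    apply div_le_div₀ (by positivity) _ (by positivity) hden
    calc _ ≤ K * K * K * K := by gcongr
      _ = K^4 := by ring
  refine (Finset.sum_le_sum hstep).trans ?_
  rw [← Finset.mul_sum, ← Finset.mul_sum]
  have hb := od_BB _ _ _ _ h1 h2 h3 h4 hα hβ hγ hω hK e1 e2 e3 e4 c1 c2 c3 c4 hKd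
  calc _ ≤ K^4 / (α^9 * β^9 * γ^9 * ω^9) * (τ^12 * (10^11 * K^5 * (τ^3 * (α^9 * β^9 * γ^9 * ω^9)))) := by
        gcongr
    _ = _ := by
        field_simp

lemma od_sumF (Y : ℕ) {τ K : ℝ} (hτ : 1 ≤ τ) (hK : 1 ≤ K) (hY : 1 ≤ Y) (hYt : (Y:ℝ) ≤ τ^6)
    (hKd : ∀ n : ℕ, 1 ≤ n → (n:ℝ) ≤ 400000 * τ^24 → (n.divisors.card : ℝ) ≤ K ∧ 1 + Real.log n ≤ K) :
    ∑ n ∈ Finset.Icc 1 Y ×ˢ Finset.Icc 1 Y ×ˢ Finset.Icc 1 Y ×ˢ Finset.Icc 1 Y, od_F τ n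
      ≤ 16 * 10^11 * K^13 * τ^15 := by
  have hK0 : 0 < K := by linarith
  have hτ0 : 0 < τ := by linarith
  set L := Nat.log 2 Y + 1 with hL
  have hF0 : ∀ n, 0 ≤ od_F τ n := by
    intro n
    have hg : 0 ≤ od_g (τ^4) n := od_g_nonneg (by positivity) n
    unfold od_F
    positivity
  have hLK : (L:ℝ) ≤ 2 * K := by
    have h1 : (Nat.log 2 Y : ℝ) * Real.log 2 ≤ Real.log Y := by
      rw [← Real.log_pow]
      apply Real.log_le_log (by positivity)
      exact_mod_cast Nat.pow_log_le_self 2 (by omega)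
    have h2 := Real.log_two_gt_d9
    have h3 : (0:ℝ) ≤ Nat.log 2 Y := Nat.cast_nonneg _
    have h4 : 1 + Real.log Y ≤ K := by
      refine (hKd Y hY ?_).2
      have h6 : τ^6 ≤ τ^24 := pow_le_pow_right₀ hτ (by norm_num)
      have : 0 ≤ τ^6 := by positivity
      linarith
    rw [hL]; push_cast
    nlinarith
  have hlog : ∀ n ∈ Finset.Icc 1 Y, Nat.log 2 n ∈ Finset.range L ∧
      n ∈ Finset.Ico (2^(Nat.log 2 n)) (2 * 2^(Nat.log 2 n)) := by
    intro n hn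
    rw [Finset.mem_Icc] at hn
    rw [Finset.mem_range, Finset.mem_Ico]
    refine ⟨Nat.lt_succ_of_le (Nat.log_mono_right hn.2), Nat.pow_log_le_self 2 (by omega), ?_⟩
    have := Nat.lt_pow_succ_log_self (b := 2) (by norm_num) n
    rw [pow_succ] at this
    omega
  have hpow : ∀ a ∈ Finset.range L, 1 ≤ 2^a ∧ (((2^a : ℕ)):ℝ) ≤ τ^6 := by
    intro a ha
    rw [Finset.mem_range] at ha
    refine ⟨Nat.one_le_two_pow, ?_⟩
    have h1 : 2^a ≤ 2^(Nat.log 2 Y) := Nat.pow_le_pow_right (by norm_num) (by omega)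
    have h2 : 2^(Nat.log 2 Y) ≤ Y := Nat.pow_log_le_self 2 (by omega)
    have h3 : ((2^a : ℕ):ℝ) ≤ Y := by exact_mod_cast h1.trans h2
    linarith
  let φ : ℕ × ℕ × ℕ × ℕ → ℕ × ℕ × ℕ × ℕ :=
    fun n => (Nat.log 2 n.1, Nat.log 2 n.2.1, Nat.log 2 n.2.2.1, Nat.log 2 n.2.2.2)
  have hmaps : ∀ n ∈ Finset.Icc 1 Y ×ˢ Finset.Icc 1 Y ×ˢ Finset.Icc 1 Y ×ˢ Finset.Icc 1 Y,
      φ n ∈ Finset.range L ×ˢ Finset.range L ×ˢ Finset.range L ×ˢ Finset.range L := by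
    intro n hn
    simp only [Finset.mem_product] at hn ⊢
    exact ⟨(hlog _ hn.1).1, (hlog _ hn.2.1).1, (hlog _ hn.2.2.1).1, (hlog _ hn.2.2.2).1⟩
  rw [← Finset.sum_fiberwise_of_maps_to hmaps]
  have hblock : ∀ a ∈ Finset.range L ×ˢ Finset.range L ×ˢ Finset.range L ×ˢ Finset.range L,
      ∑ n ∈ (Finset.Icc 1 Y ×ˢ Finset.Icc 1 Y ×ˢ Finset.Icc 1 Y ×ˢ Finset.Icc 1 Y).filter
        (fun n => φ n = a), od_F τ n ≤ 10^11 * K^9 * τ^15 := by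
    intro a ha
    simp only [Finset.mem_product] at ha
    obtain ⟨a1, a2, a3, a4⟩ := ha
    refine le_trans ?_ (od_blockF (2^a.1, 2^a.2.1, 2^a.2.2.1, 2^a.2.2.2) hτ hK
      (hpow _ a1).1 (hpow _ a2).1 (hpow _ a3).1 (hpow _ a4).1
      (hpow _ a1).2 (hpow _ a2).2 (hpow _ a3).2 (hpow _ a4).2 hKd)
    apply Finset.sum_le_sum_of_subset_of_nonneg
    · intro n hn
      rw [Finset.mem_filter] at hn
      obtain ⟨hn, rfl⟩ := hn
      simp only [Finset.mem_product] at hn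
      simp only [od_Q, Finset.mem_product]
      exact ⟨(hlog _ hn.1).2, (hlog _ hn.2.1).2, (hlog _ hn.2.2.1).2, (hlog _ hn.2.2.2).2⟩
    · intro n _ _
      exact hF0 n
  refine (Finset.sum_le_card_nsmul _ _ _ hblock).trans ?_
  rw [nsmul_eq_mul]
  simp only [Finset.card_product, Finset.card_range]
  push_cast
  calc (L:ℝ) * (L * (L * L)) * (10^11 * K^9 * τ^15)
      ≤ (2*K) * ((2*K) * ((2*K) * (2*K))) * (10^11 * K^9 * τ^15) := by gcongr
    _ = _ := by ring


theorem offdiagonal_sum_bound_plus (ε : ℝ) (hε : 0 < ε) :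
    ∃ C : ℝ, 0 < C ∧ ∀ T : ℝ, 10 ≤ T →
      (∑ n₁ ∈ Finset.Icc 1 ⌊T ^ ((3:ℝ)/4)⌋₊, ∑ n₂ ∈ Finset.Icc 1 ⌊T ^ ((3:ℝ)/4)⌋₊,
       ∑ n₃ ∈ Finset.Icc 1 ⌊T ^ ((3:ℝ)/4)⌋₊, ∑ n₄ ∈ Finset.Icc 1 ⌊T ^ ((3:ℝ)/4)⌋₊,
        if Real.sqrt n₁ + Real.sqrt n₂ + Real.sqrt n₃ - Real.sqrt n₄ ≠ 0 then
          ((n₁.divisors.card * n₂.divisors.card * n₃.divisors.card * n₄.divisors.card : ℕ) : ℝ)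
              / ((n₁ : ℝ) * n₂ * n₃ * n₄) ^ ((3:ℝ)/4)
            * min (T ^ 2) (T ^ ((3:ℝ)/2)
                / |Real.sqrt n₁ + Real.sqrt n₂ + Real.sqrt n₃ - Real.sqrt n₄|)
        else 0)
      ≤ C * T ^ (2 - 1/8 + ε) := by
  obtain ⟨C0, hC0, hKd⟩ := od_K (8 * ε / 13) (by positivity)
  refine ⟨16 * 10^11 * C0^13, by positivity, ?_⟩
  intro T hT
  have hT0 : 0 < T := by linarith
  have hT1 : 1 ≤ T := by linarith
  set τ : ℝ := T ^ ((1:ℝ)/8) with hτdef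
  have hτ : 1 ≤ τ := Real.one_le_rpow hT1 (by norm_num)
  have hτ0 : 0 < τ := by linarith
  have hpw : ∀ k : ℕ, τ^k = T ^ ((k:ℝ)/8) := by
    intro k
    rw [hτdef, ← Real.rpow_natCast, ← Real.rpow_mul hT0.le]
    congr 1; ring
  have h6 : T ^ ((3:ℝ)/4) = τ^6 := by rw [hpw]; norm_num
  have h12 : T ^ ((3:ℝ)/2) = τ^12 := by rw [hpw]; norm_num
  have h16 : T ^ 2 = τ^12 * τ^4 := by
    rw [← pow_add, hpw, ← Real.rpow_natCast]; norm_num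
  rw [h6, h12, h16]
  have hp6 : 1 ≤ τ^6 := one_le_pow₀ hτ
  have hK1 : 1 ≤ C0 * τ ^ (8 * ε / 13) := by
    have := Real.one_le_rpow hτ (z := 8 * ε / 13) (by positivity)
    nlinarith
  have hmain := od_sumF ⌊τ^6⌋₊ hτ hK1 ((Nat.one_le_floor_iff _).2 hp6) (Nat.floor_le (by linarith))
    (hKd τ hτ)
  have hfin : 16 * 10^11 * (C0 * τ ^ (8 * ε / 13))^13 * τ^15 = 16 * 10^11 * C0^13 * T ^ (2 - 1/8 + ε) := by
    have h1 : (τ ^ (8 * ε / 13))^13 = T ^ ε := by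
      rw [hτdef, ← Real.rpow_natCast, ← Real.rpow_mul hT0.le, ← Real.rpow_mul hT0.le]
      congr 1; push_cast; ring
    rw [mul_pow, h1, hpw, show (2 - 1/8 + ε : ℝ) = ((15:ℕ):ℝ)/8 + ε by push_cast; ring,
      Real.rpow_add hT0]
    ring
  rw [hfin] at hmain
  refine le_trans (le_of_eq ?_) hmain
  simp only [Finset.sum_product]
  refine Finset.sum_congr rfl fun n₁ _ => Finset.sum_congr rfl fun n₂ _ =>
    Finset.sum_congr rfl fun n₃ _ => Finset.sum_congr rfl fun n₄ _ => ?_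
  by_cases h : Real.sqrt n₁ + Real.sqrt n₂ + Real.sqrt n₃ - Real.sqrt n₄ ≠ 0
  · have hg : od_g (τ^4) (n₁, n₂, n₃, n₄) =
        min (τ^4) (1 / |Real.sqrt n₁ + Real.sqrt n₂ + Real.sqrt n₃ - Real.sqrt n₄|) := if_pos h
    rw [if_pos h, od_F, hg, mul_min_of_nonneg _ _ (by positivity : (0:ℝ) ≤ τ^12), mul_one_div]
    push_cast
    rfl
  · have hg : od_g (τ^4) (n₁, n₂, n₃, n₄) = 0 := if_neg h
    rw [if_neg h, od_F, hg, mul_zero, mul_zero]
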